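/- Let H > 0 and let f : ℝ → ℝ be of class C² with f(0) = 0, F(s) = ∫₀ˢ f(σ) dσ ≥ 0 for all s ∈ ℝ, and suppose there exist δ, M > 0 such that |f'(s)| ≤ M·s² for all s ∈ (−δ, δ). Let g, h ∈ C_0^∞(ℝ³) be radial. Then there exists ε > 0 such that the Cauchy problem ∂ₜ²φ + 3H ∂ₜφ − e^{−2Ht} Δφ + f(φ) = 0 on [0,∞)×ℝ³ with initial data (φ, ∂ₜφ)|_{t=0} = (ε·g, ε·h) has a global-in-time C² solution φ : [0,∞)×ℝ³ → ℝ, which moreover is radial in x and has, for each time t, compact support in the space variable. -/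

import Mathlib

open MeasureTheory Filter

noncomputable section

/-- Euclidean space `ℝ³`. -/
abbrev E3 : Type := EuclideanSpace ℝ (Fin 3)

/-- The Laplacian of a function on `ℝ³`, as the sum of second partial derivatives. -/
def lap (u : E3 → ℝ) (x : E3) : ℝ :=
  ∑ i : Fin 3,
    fderiv ℝ (fun y => fderiv ℝ u y (EuclideanSpace.single i 1)) x (EuclideanSpace.single i 1)

/-- First time derivative `∂ₜφ`. -/
def dt1 (φ : ℝ → E3 → ℝ) (t : ℝ) (x : E3) : ℝ := deriv (fun s => φ s x) t

/-- Second time derivative `∂ₜ²φ`. -/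
def dt2 (φ : ℝ → E3 → ℝ) (t : ℝ) (x : E3) : ℝ := deriv (fun s => dt1 φ s x) t

/-- The potential `F(s) = ∫₀ˢ f(σ) dσ`. -/
def pot (f : ℝ → ℝ) (s : ℝ) : ℝ := ∫ σ in (0:ℝ)..s, f σ

open Set Metric Topology

/-! ### The invariant measure on the sphere -/

def nrmz (x : E3) : E3 := ‖x‖⁻¹ • x

lemma measurable_nrmz : Measurable nrmz := by unfold nrmz; fun_prop

def sph0 : Measure E3 := (volume (ball (0:E3) 1))⁻¹ • volume.restrict (ball (0:E3) 1)

def sph : Measure E3 := sph0.map nrmz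

instance : IsProbabilityMeasure sph0 := by
  constructor
  have h1 : volume (ball (0:E3) 1) ≠ 0 := (measure_ball_pos _ _ one_pos).ne'
  have h2 : volume (ball (0:E3) 1) ≠ ⊤ := measure_ball_lt_top.ne
  rw [sph0, Measure.smul_apply, Measure.restrict_apply_univ, smul_eq_mul,
    ENNReal.inv_mul_cancel h1 h2]

instance : IsProbabilityMeasure sph :=
  Measure.isProbabilityMeasure_map measurable_nrmz.aemeasurable

lemma sph_ae : ∀ᵐ ω ∂sph, ω ∈ sphere (0:E3) 1 := by
  unfold sph
  refine (ae_map_iff (p := fun ω => ω ∈ sphere (0:E3) 1) measurable_nrmz.aemeasurable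
    isClosed_sphere.measurableSet).2 ?_
  have h0 : ∀ᵐ x ∂sph0, x ≠ (0:E3) := by
    apply Measure.ae_smul_measure
    apply ae_restrict_of_ae
    exact Measure.ae_ne volume 0
  filter_upwards [h0] with x hx
  simp [nrmz, norm_smul, hx]

lemma sph_restrict : sph.restrict (sphere (0:E3) 1) = sph :=
  Measure.restrict_eq_self_of_ae_mem sph_ae

lemma nrmz_comm (e : E3 ≃ₗᵢ[ℝ] E3) (x : E3) : nrmz (e x) = e (nrmz x) := by
  simp [nrmz]

lemma sph_inv (e : E3 ≃ₗᵢ[ℝ] E3) : MeasurePreserving e sph sph := by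
  refine ⟨e.continuous.measurable, ?_⟩
  have h1 : sph0.map e = sph0 := by
    have h2 := (e.measurePreserving).restrict_preimage
      (s := ball (0:E3) 1) isOpen_ball.measurableSet
    have h3 : e ⁻¹' (ball (0:E3) 1) = ball 0 1 := by ext; simp
    rw [h3] at h2
    rw [sph0, Measure.map_smul, h2.map_eq]
  unfold sph
  rw [Measure.map_map e.continuous.measurable measurable_nrmz]
  have : e ∘ nrmz = nrmz ∘ e := by ext1 x; simp [nrmz_comm]
  rw [this, ← Measure.map_map measurable_nrmz e.continuous.measurable, h1]

lemma sph_integral_inv {F : Type*} [NormedAddCommGroup F] [NormedSpace ℝ F]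
    (e : E3 ≃ₗᵢ[ℝ] E3) (T : E3 → F) : ∫ ω, T (e ω) ∂sph = ∫ ω, T ω ∂sph :=
  (sph_inv e).integral_comp (e.toHomeomorph.measurableEmbedding) T

section means
variable {F : Type*} [NormedAddCommGroup F] [NormedSpace ℝ F]

lemma sph_integrable {T : E3 → F} (hT : Continuous T) : Integrable T sph := by
  have := hT.continuousOn.integrableOn_compact (μ := sph) (isCompact_sphere (0:E3) 1)
  rwa [IntegrableOn, sph_restrict] at this

lemma sph_continuous {X : Type*} [TopologicalSpace X] [FirstCountableTopology X]
    [LocallyCompactSpace X] {T : X → E3 → F} (hT : Continuous (Function.uncurry T)) :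
    Continuous fun x => ∫ ω, T x ω ∂sph := by
  have := continuous_parametric_integral_of_continuous (μ := sph) hT (isCompact_sphere (0:E3) 1)
  rwa [sph_restrict] at this

lemma sph_norm_le {T : E3 → F} {c : ℝ} (h : ∀ ω, ‖ω‖ = 1 → ‖T ω‖ ≤ c) :
    ‖∫ ω, T ω ∂sph‖ ≤ c := by
  have := norm_integral_le_of_norm_le_const (μ := sph) (f := T) (C := c) (by
    filter_upwards [sph_ae] with ω hω
    exact h ω (by simpa using hω))
  simpa using this

lemma sph_hasFDerivAt {P : Type*} [NormedAddCommGroup P] [NormedSpace ℝ P] [FiniteDimensional ℝ P]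
    {Q : P → E3 → F} {Q' : P → E3 → P →L[ℝ] F}
    (hQ : Continuous (Function.uncurry Q)) (hQ' : Continuous (Function.uncurry Q'))
    (h : ∀ p ω, HasFDerivAt (fun p => Q p ω) (Q' p ω) p) (p : P) :
    HasFDerivAt (fun p => ∫ ω, Q p ω ∂sph) (∫ ω, Q' p ω ∂sph) p := by
  have : ProperSpace P := FiniteDimensional.proper ℝ P
  obtain ⟨B, hB⟩ := (((isCompact_closedBall p 1).prod (isCompact_sphere (0:E3) 1)).bddAbove_image
    hQ'.norm.continuousOn)
  refine hasFDerivAt_integral_of_dominated_of_fderiv_le (bound := fun _ => B)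
    (closedBall_mem_nhds p one_pos) ?_ (sph_integrable (by fun_prop)) ?_ ?_ (by simp) ?_
  · exact Eventually.of_forall fun x => (Continuous.aestronglyMeasurable (by fun_prop))
  · exact (sph_integrable (by fun_prop)).aestronglyMeasurable
  · filter_upwards [sph_ae] with ω hω x hx
    exact hB ⟨(x, ω), ⟨hx, hω⟩, rfl⟩
  · exact Eventually.of_forall fun ω x _ => h x ω

lemma ivl_hasFDerivAt {P : Type*} [NormedAddCommGroup P] [NormedSpace ℝ P] [FiniteDimensional ℝ P]
    {Q : P → ℝ → F} {Q' : P → ℝ → P →L[ℝ] F}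
    (hQ : Continuous (Function.uncurry Q)) (hQ' : Continuous (Function.uncurry Q'))
    (h : ∀ p ω, HasFDerivAt (fun p => Q p ω) (Q' p ω) p) (a b : ℝ) (p : P) :
    HasFDerivAt (fun p => ∫ s in a..b, Q p s) (∫ s in a..b, Q' p s) p := by
  have : ProperSpace P := FiniteDimensional.proper ℝ P
  obtain ⟨B, hB⟩ := (((isCompact_closedBall p 1).prod (isCompact_uIcc (a := a) (b := b))).bddAbove_image
    hQ'.norm.continuousOn)
  refine intervalIntegral.hasFDerivAt_integral_of_dominated_of_fderiv_le (bound := fun _ => B)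
    (closedBall_mem_nhds p one_pos) ?_ (Continuous.intervalIntegrable (by fun_prop) _ _) ?_ ?_
      (by simp) ?_
  · exact Eventually.of_forall fun x => (Continuous.aestronglyMeasurable (by fun_prop))
  · exact (Continuous.aestronglyMeasurable (by fun_prop))
  · exact Eventually.of_forall fun s hs x hx => hB ⟨(x, s), ⟨hx, uIoc_subset_uIcc hs⟩, rfl⟩
  · exact Eventually.of_forall fun ω _ x _ => h x ω

variable [CompleteSpace F]

lemma prim_hasDerivAt {Q Q' : ℝ → ℝ → F}
    (hQ : Continuous (Function.uncurry Q)) (hQ' : Continuous (Function.uncurry Q'))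
    (h : ∀ t s, HasDerivAt (fun t => Q t s) (Q' t s) t) (t : ℝ) :
    HasDerivAt (fun t => ∫ s in (0:ℝ)..t, Q t s) (Q t t + ∫ s in (0:ℝ)..t, Q' t s) t := by
  set f₁ : ℝ → ℝ → ℝ →L[ℝ] F := fun b t => ContinuousLinearMap.toSpanSingleton ℝ (Q t b)
  set f₂ : ℝ → ℝ → ℝ →L[ℝ] F := fun b t =>
    ∫ s in (0:ℝ)..b, ContinuousLinearMap.toSpanSingleton ℝ (Q' t s)
  have key := hasStrictFDerivAt_uncurry_coprod (𝕜 := ℝ) (u := (t, t))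
    (f := fun b t => ∫ s in (0:ℝ)..b, Q t s) (f₁ := f₁) (f₂ := f₂) ?_ ?_ ?_ ?_
  · have h2 : HasFDerivAt (fun t : ℝ => (t, t)) _ t :=
      ((hasFDerivAt_id (𝕜 := ℝ) t).prodMk (hasFDerivAt_id (𝕜 := ℝ) t))
    have h3 := (HasFDerivAt.comp (f := fun t : ℝ => (t, t)) t key.hasFDerivAt h2).hasDerivAt
    refine h3.congr_deriv ?_
    simp [f₁, f₂, Function.HasUncurry.uncurry]
    rw [ContinuousLinearMap.intervalIntegral_apply]
    · simp
    · apply Continuous.intervalIntegrable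
      exact (ContinuousLinearMap.toSpanSingletonCLE (𝕜 := ℝ) (E := F)).continuous.comp (by fun_prop)
  · refine Eventually.of_forall fun v => ?_
    exact (intervalIntegral.integral_hasDerivAt_right
      (Continuous.intervalIntegrable (by fun_prop) _ _)
      (Continuous.stronglyMeasurableAtFilter (by fun_prop) _ _)
      (Continuous.continuousAt (by fun_prop))).hasFDerivAt
  · refine Eventually.of_forall fun v => ?_
    refine ivl_hasFDerivAt (Q := Q) (Q' := fun t s => ContinuousLinearMap.toSpanSingleton ℝ (Q' t s)) hQ ?_ ?_ _ _ _
    · exact (ContinuousLinearMap.toSpanSingletonCLE (𝕜 := ℝ) (E := F)).continuous.comp hQ'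
    · intro p ω
      exact (h p ω).hasFDerivAt
  · apply Continuous.continuousAt
    exact (ContinuousLinearMap.toSpanSingletonCLE (𝕜 := ℝ) (E := F)).continuous.comp
      (hQ.comp (continuous_snd.prodMk continuous_fst))
  · apply Continuous.continuousAt
    refine intervalIntegral.continuous_parametric_intervalIntegral_of_continuous (X := ℝ × ℝ)
      (f := fun p s => ContinuousLinearMap.toSpanSingleton ℝ (Q' p.2 s)) ?_ continuous_fst
    exact (ContinuousLinearMap.toSpanSingletonCLE (𝕜 := ℝ) (E := F)).continuous.comp
      (hQ'.comp ((continuous_snd.comp continuous_fst).prodMk continuous_snd))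

end means

/-! ### Rotations and the Darboux identity -/

abbrev bv (i : Fin 3) : E3 := EuclideanSpace.single i 1

def rotJ (i j : Fin 3) : E3 →L[ℝ] E3 :=
  (EuclideanSpace.proj i : E3 →L[ℝ] ℝ).smulRight (bv j) -
    (EuclideanSpace.proj j : E3 →L[ℝ] ℝ).smulRight (bv i)

def rotP (i j : Fin 3) : E3 →L[ℝ] E3 :=
  (EuclideanSpace.proj i : E3 →L[ℝ] ℝ).smulRight (bv i) +
    (EuclideanSpace.proj j : E3 →L[ℝ] ℝ).smulRight (bv j)

def rotR (i j : Fin 3) (θ : ℝ) : E3 →L[ℝ] E3 :=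
  ContinuousLinearMap.id ℝ E3 + (Real.cos θ - 1) • rotP i j + Real.sin θ • rotJ i j

lemma rotR_norm (i j : Fin 3) (hij : i ≠ j) (θ : ℝ) (ω : E3) : ‖rotR i j θ ω‖ = ‖ω‖ := by
  rw [EuclideanSpace.norm_eq, EuclideanSpace.norm_eq]
  congr 1
  have h := Real.sin_sq_add_cos_sq θ
  have h2 : Real.sin θ ^ 2 = 1 - Real.cos θ ^ 2 := by linarith
  fin_cases i <;> fin_cases j <;>
    simp [rotR, rotP, rotJ, Fin.sum_univ_three] at hij ⊢ <;> ring_nf <;> rw [h2] <;> ring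

def rotE (i j : Fin 3) (hij : i ≠ j) (θ : ℝ) : E3 ≃ₗᵢ[ℝ] E3 :=
  LinearIsometry.toLinearIsometryEquiv
    ⟨(rotR i j θ).toLinearMap, fun ω => rotR_norm i j hij θ ω⟩ rfl

lemma rotE_apply (i j : Fin 3) (hij : i ≠ j) (θ : ℝ) (ω : E3) :
    rotE i j hij θ ω = rotR i j θ ω := rfl

lemma rot_zero {v : E3 → ℝ} {v' : E3 → E3 →L[ℝ] ℝ} (hv : ∀ y, HasFDerivAt v (v' y) y)
    (hv' : Continuous v') (i j : Fin 3) (hij : i ≠ j) :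
    ∫ ω, v' ω (rotJ i j ω) ∂sph = 0 := by
  have hvc : Continuous v := continuous_iff_continuousAt.2 fun y => (hv y).continuousAt
  set R' : ℝ → E3 →L[ℝ] E3 := fun θ => (-Real.sin θ) • rotP i j + Real.cos θ • rotJ i j with hR'
  have hR : Continuous (rotR i j) := by unfold rotR; fun_prop
  have hR'c : Continuous R' := by fun_prop
  have hRd : ∀ θ, HasDerivAt (rotR i j) (R' θ) θ := by
    intro θ
    unfold rotR
    have := ((((Real.hasDerivAt_cos θ).sub_const 1).smul_const (rotP i j)).const_add
      (ContinuousLinearMap.id ℝ E3)).add ((Real.hasDerivAt_sin θ).smul_const (rotJ i j))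
    exact this
  have key := sph_hasFDerivAt (P := ℝ) (Q := fun θ ω => v (rotR i j θ ω))
    (Q' := fun θ ω => (ContinuousLinearMap.toSpanSingleton ℝ (v' (rotR i j θ ω) (R' θ ω))))
    (by fun_prop) (by
      refine (ContinuousLinearMap.toSpanSingletonCLE (𝕜 := ℝ) (E := ℝ)).continuous.comp ?_
      fun_prop) (by
      intro θ ω
      have h1 : HasDerivAt (fun θ => rotR i j θ ω) (R' θ ω) θ := by
        have := (ContinuousLinearMap.apply ℝ E3 ω).hasFDerivAt.comp_hasDerivAt θ (hRd θ)
        exact this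
      exact ((hv _).comp_hasDerivAt θ h1).hasFDerivAt) 0
  have hconst : (fun θ : ℝ => ∫ ω, v (rotR i j θ ω) ∂sph) = fun _ => ∫ ω, v ω ∂sph := by
    ext θ
    exact sph_integral_inv (rotE i j hij θ) v
  rw [hconst] at key
  have h0 := key.unique (hasFDerivAt_const _ _)
  have h1 := congrArg (fun L : ℝ →L[ℝ] ℝ => L 1) h0
  simp only [ContinuousLinearMap.zero_apply] at h1
  rw [ContinuousLinearMap.integral_apply] at h1
  · simpa [rotR, hR'] using h1
  · apply sph_integrable
    refine (ContinuousLinearMap.toSpanSingletonCLE (𝕜 := ℝ) (E := ℝ)).continuous.comp ?_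
    fun_prop

lemma darboux_aux {u' : E3 → E3 →L[ℝ] ℝ} {u'' : E3 → E3 →L[ℝ] E3 →L[ℝ] ℝ}
    (hu' : ∀ y, HasFDerivAt u' (u'' y) y) (hu'' : Continuous u'') (x : E3) (k : ℝ)
    (i j : Fin 3) (hij : i ≠ j) :
    ∫ ω, (k * u'' (x + k • ω) (rotJ i j ω) (rotJ i j ω) +
      u' (x + k • ω) (rotJ i j (rotJ i j ω))) ∂sph = 0 := by
  have hu'c : Continuous u' := continuous_iff_continuousAt.2 fun y => (hu' y).continuousAt
  have := rot_zero (v := fun ω => u' (x + k • ω) (rotJ i j ω))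
    (v' := fun ω => ((u'' (x + k • ω)).comp (k • ContinuousLinearMap.id ℝ E3)).flip (rotJ i j ω) +
      (u' (x + k • ω)).comp (rotJ i j)) ?_ ?_ i j hij
  · simpa using this
  · intro ω
    have h1 : HasFDerivAt (fun ω : E3 => x + k • ω) (k • ContinuousLinearMap.id ℝ E3) ω :=
      ((hasFDerivAt_id ω).const_smul k).const_add x
    have h2 := ((hu' (x + k • ω)).comp ω h1).clm_apply (rotJ i j).hasFDerivAt
    refine h2.congr_fderiv ?_
    ext z; simp; ring
  · have e : (fun ω : E3 => ((u'' (x + k • ω)).comp (k • ContinuousLinearMap.id ℝ E3)).flip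
        (rotJ i j ω)) = fun ω => k • ((ContinuousLinearMap.flipₗᵢ ℝ E3 E3 ℝ) (u'' (x + k • ω))
        (rotJ i j ω)) := by
      ext; simp
    refine Continuous.add ?_ ?_
    · rw [e]
      refine Continuous.const_smul (Continuous.clm_apply ?_ (by fun_prop)) k
      exact (ContinuousLinearMap.flipₗᵢ ℝ E3 E3 ℝ).continuous.comp (by fun_prop)
    · fun_prop

lemma bilin_id (B : E3 →L[ℝ] E3 →L[ℝ] ℝ) (ω : E3) (h : ‖ω‖ = 1) :
    B (rotJ 0 1 ω) (rotJ 0 1 ω) + B (rotJ 0 2 ω) (rotJ 0 2 ω) + B (rotJ 1 2 ω) (rotJ 1 2 ω)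
      = ∑ i, B (bv i) (bv i) - B ω ω := by
  have hn : ω 0 ^ 2 + ω 1 ^ 2 + ω 2 ^ 2 = 1 := by
    have := EuclideanSpace.norm_sq_eq ω
    rw [h] at this
    simp [Fin.sum_univ_three] at this
    linarith
  have hω : ω = ω 0 • bv 0 + ω 1 • bv 1 + ω 2 • bv 2 := by
    ext i; fin_cases i <;> simp
  generalize ω 0 = a at *
  generalize ω 1 = b at *
  generalize ω 2 = c at *
  subst hω
  simp [rotJ, Fin.sum_univ_three]
  linear_combination (B (bv 0) (bv 0) + B (bv 1) (bv 1) + B (bv 2) (bv 2)) * hn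

lemma rotJ_sq (ω : E3) : rotJ 0 1 (rotJ 0 1 ω) + rotJ 0 2 (rotJ 0 2 ω) + rotJ 1 2 (rotJ 1 2 ω)
    = (-2 : ℝ) • ω := by
  ext i; fin_cases i <;> simp [rotJ] <;> ring

lemma darboux {u' : E3 → E3 →L[ℝ] ℝ} {u'' : E3 → E3 →L[ℝ] E3 →L[ℝ] ℝ}
    (hu' : ∀ y, HasFDerivAt u' (u'' y) y) (hu'' : Continuous u'') (x : E3) (k : ℝ) :
    k * ∫ ω, (∑ i, u'' (x + k • ω) (bv i) (bv i)) ∂sph - k * ∫ ω, u'' (x + k • ω) ω ω ∂sph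
      = 2 * ∫ ω, u' (x + k • ω) ω ∂sph := by
  have hu'c : Continuous u' := continuous_iff_continuousAt.2 fun y => (hu' y).continuousAt
  have h01 := darboux_aux hu' hu'' x k 0 1 (by decide)
  have h02 := darboux_aux hu' hu'' x k 0 2 (by decide)
  have h12 := darboux_aux hu' hu'' x k 1 2 (by decide)
  have hI : ∀ i j, Integrable (fun ω => (k * u'' (x + k • ω) (rotJ i j ω) (rotJ i j ω) +
      u' (x + k • ω) (rotJ i j (rotJ i j ω)))) sph := fun i j => sph_integrable (by fun_prop)
  have hs : ∫ ω, ((k * u'' (x + k • ω) (rotJ 0 1 ω) (rotJ 0 1 ω) +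
      u' (x + k • ω) (rotJ 0 1 (rotJ 0 1 ω))) + (k * u'' (x + k • ω) (rotJ 0 2 ω) (rotJ 0 2 ω) +
      u' (x + k • ω) (rotJ 0 2 (rotJ 0 2 ω))) + (k * u'' (x + k • ω) (rotJ 1 2 ω) (rotJ 1 2 ω) +
      u' (x + k • ω) (rotJ 1 2 (rotJ 1 2 ω)))) ∂sph = 0 := by
    have e1 := integral_add (hI 0 1) (hI 0 2)
    have e2 := integral_add ((hI 0 1).add (hI 0 2)) (hI 1 2)
    simp only [Pi.add_apply] at e2
    rw [e2, e1, h01, h02, h12]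
    simp
  rw [← integral_const_mul, ← integral_const_mul, ← integral_const_mul, ← integral_sub,
    ← sub_eq_zero, ← integral_sub, ← hs]
  · apply integral_congr_ae
    filter_upwards [sph_ae] with ω hω
    have h1 := bilin_id (u'' (x + k • ω)) ω (by simpa using hω)
    have h2 := congrArg (u' (x + k • ω)) (rotJ_sq ω)
    simp only [map_add, map_smul, smul_eq_mul] at h2
    linear_combination (-k) * h1 - h2
  all_goals exact sph_integrable (by fun_prop)


/-! ### Spherical-mean Duhamel operators -/

def kk (H t s : ℝ) : ℝ := (Real.exp (-H * s) - Real.exp (-H * t)) / H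

lemma kk_cont (H : ℝ) : Continuous fun p : ℝ × ℝ => kk H p.1 p.2 := by
  unfold kk; fun_prop

lemma kk_self (H t : ℝ) : kk H t t = 0 := by simp [kk]

lemma kk_deriv {H : ℝ} (hH : 0 < H) (t s : ℝ) :
    HasDerivAt (fun t => kk H t s) (Real.exp (-H * t)) t := by
  unfold kk
  have h1 : HasDerivAt (fun t : ℝ => Real.exp (-H * t)) (Real.exp (-H * t) * (-H)) t := by
    have := ((hasDerivAt_id t).const_mul (-H)).exp
    simpa using this
  have h2 := ((hasDerivAt_const t (Real.exp (-H * s))).sub h1).div_const H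
  refine h2.congr_deriv ?_
  field_simp; ring

section Iop
variable {F : Type*} [NormedAddCommGroup F] [NormedSpace ℝ F]

def Iop (H : ℝ) (c : ℝ → ℝ → ℝ) (T : ℝ → E3 → E3 → F) (t : ℝ) (x : E3) : F :=
  ∫ s in (0:ℝ)..t, c t s • ∫ ω, T s ω (x + kk H t s • ω) ∂sph

variable {H : ℝ} {c : ℝ → ℝ → ℝ} {T : ℝ → E3 → E3 → F}

lemma mean_cont (hT : Continuous fun p : ℝ × E3 × E3 => T p.1 p.2.1 p.2.2) :
    Continuous fun q : (ℝ × E3) × ℝ => ∫ ω, T q.2 ω (q.1.2 + kk H q.1.1 q.2 • ω) ∂sph := by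
  apply sph_continuous
  have h1 : Continuous fun z : ((ℝ × E3) × ℝ) × E3 => kk H z.1.1.1 z.1.2 :=
    (kk_cont H).comp (by fun_prop : Continuous fun z : ((ℝ × E3) × ℝ) × E3 => (z.1.1.1, z.1.2))
  exact hT.comp (by fun_prop : Continuous fun z : ((ℝ × E3) × ℝ) × E3 =>
    (z.1.2, z.2, z.1.1.2 + kk H z.1.1.1 z.1.2 • z.2))

lemma int_cont (hc : Continuous fun p : ℝ × ℝ => c p.1 p.2)
    (hT : Continuous fun p : ℝ × E3 × E3 => T p.1 p.2.1 p.2.2) :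
    Continuous fun q : (ℝ × E3) × ℝ =>
      c q.1.1 q.2 • ∫ ω, T q.2 ω (q.1.2 + kk H q.1.1 q.2 • ω) ∂sph :=
  (hc.comp (by fun_prop : Continuous fun q : (ℝ × E3) × ℝ => (q.1.1, q.2))).smul (mean_cont hT)

lemma Iop_cont (hc : Continuous fun p : ℝ × ℝ => c p.1 p.2)
    (hT : Continuous fun p : ℝ × E3 × E3 => T p.1 p.2.1 p.2.2) :
    Continuous fun p : ℝ × E3 => Iop H c T p.1 p.2 := by
  unfold Iop
  exact intervalIntegral.continuous_parametric_intervalIntegral_of_continuous (X := ℝ × E3)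
    (f := fun q s => c q.1 s • ∫ ω, T s ω (q.2 + kk H q.1 s • ω) ∂sph)
    (int_cont hc hT) continuous_fst

lemma clm_intervalIntegral_smul {G : Type*} [NormedAddCommGroup G] [NormedSpace ℝ G]
    [CompleteSpace F] [CompleteSpace G]
    (A : F →L[ℝ] G) (hc : Continuous fun p : ℝ × ℝ => c p.1 p.2)
    (hT : Continuous fun p : ℝ × E3 × E3 => T p.1 p.2.1 p.2.2) (t : ℝ) (x : E3) :
    A (Iop H c T t x) = Iop H c (fun s ω y => A (T s ω y)) t x := by
  unfold Iop
  have h1 : Continuous fun s => c t s • ∫ ω, T s ω (x + kk H t s • ω) ∂sph :=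
    (int_cont hc hT).comp (by fun_prop : Continuous fun s : ℝ => ((t, x), s))
  rw [← A.intervalIntegral_comp_comm (h1.intervalIntegrable _ _)]
  apply intervalIntegral.integral_congr
  intro s _
  have h2 : Continuous fun ω => T s ω (x + kk H t s • ω) :=
    hT.comp (by fun_prop : Continuous fun ω : E3 => (s, ω, x + kk H t s • ω))
  simp only [map_smul]
  rw [A.integral_comp_comm (sph_integrable h2)]

variable {T' : ℝ → E3 → E3 → E3 →L[ℝ] F}

lemma mean_deriv_x 
    (hT : Continuous fun p : ℝ × E3 × E3 => T p.1 p.2.1 p.2.2)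
    (hT' : Continuous fun p : ℝ × E3 × E3 => T' p.1 p.2.1 p.2.2)
    (hd : ∀ s ω y, HasFDerivAt (T s ω) (T' s ω y) y) (s κ : ℝ) (x : E3) :
    HasFDerivAt (fun x => ∫ ω, T s ω (x + κ • ω) ∂sph) (∫ ω, T' s ω (x + κ • ω) ∂sph) x := by
  refine sph_hasFDerivAt (Q := fun x ω => T s ω (x + κ • ω)) (Q' := fun x ω => T' s ω (x + κ • ω))
    (hT.comp (by fun_prop : Continuous fun z : E3 × E3 => (s, z.2, z.1 + κ • z.2)))
    (hT'.comp (by fun_prop : Continuous fun z : E3 × E3 => (s, z.2, z.1 + κ • z.2))) ?_ x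
  intro p ω
  have h2 : HasFDerivAt (fun p : E3 => p + κ • ω) (ContinuousLinearMap.id ℝ E3) p :=
    (hasFDerivAt_id p).add_const _
  exact (hd s ω (p + κ • ω)).comp p h2

lemma Iop_deriv_x (hc : Continuous fun p : ℝ × ℝ => c p.1 p.2)
    (hT : Continuous fun p : ℝ × E3 × E3 => T p.1 p.2.1 p.2.2)
    (hT' : Continuous fun p : ℝ × E3 × E3 => T' p.1 p.2.1 p.2.2)
    (hd : ∀ s ω y, HasFDerivAt (T s ω) (T' s ω y) y) (t : ℝ) (x : E3) :
    HasFDerivAt (fun x => Iop H c T t x) (Iop H c T' t x) x := by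
  unfold Iop
  refine ivl_hasFDerivAt (Q := fun x s => c t s • ∫ ω, T s ω (x + kk H t s • ω) ∂sph)
    (Q' := fun x s => c t s • ∫ ω, T' s ω (x + kk H t s • ω) ∂sph)
    ((int_cont hc hT).comp (by fun_prop : Continuous fun z : E3 × ℝ => ((t, z.1), z.2)))
    ((int_cont hc hT').comp (by fun_prop : Continuous fun z : E3 × ℝ => ((t, z.1), z.2))) ?_ 0 t x
  intro p s
  exact (mean_deriv_x hT hT' hd s _ p).const_smul (c t s)

variable [CompleteSpace F]

lemma mean_deriv_k
    (hT : Continuous fun p : ℝ × E3 × E3 => T p.1 p.2.1 p.2.2)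
    (hT' : Continuous fun p : ℝ × E3 × E3 => T' p.1 p.2.1 p.2.2)
    (hd : ∀ s ω y, HasFDerivAt (T s ω) (T' s ω y) y) (s κ : ℝ) (x : E3) :
    HasDerivAt (fun κ : ℝ => ∫ ω, T s ω (x + κ • ω) ∂sph) (∫ ω, T' s ω (x + κ • ω) ω ∂sph) κ := by
  have hA : Continuous fun z : ℝ × E3 => T' s z.2 (x + z.1 • z.2) z.2 := 
    (hT'.comp (by fun_prop : Continuous fun z : ℝ × E3 => (s, z.2, x + z.1 • z.2))).clm_apply
      continuous_snd
  have hB : Continuous fun z : ℝ × E3 =>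
      ContinuousLinearMap.toSpanSingleton ℝ (T' s z.2 (x + z.1 • z.2) z.2) :=
    (ContinuousLinearMap.toSpanSingletonCLE (𝕜 := ℝ) (E := F)).continuous.comp hA
  have := sph_hasFDerivAt (P := ℝ) (Q := fun κ ω => T s ω (x + κ • ω))
    (Q' := fun κ ω => ContinuousLinearMap.toSpanSingleton ℝ (T' s ω (x + κ • ω) ω))
    (hT.comp (by fun_prop : Continuous fun z : ℝ × E3 => (s, z.2, x + z.1 • z.2))) hB ?_ κ
  · have h3 := this.hasDerivAt
    refine h3.congr_deriv ?_
    rw [ContinuousLinearMap.integral_apply]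
    · simp
    · exact sph_integrable (hB.comp (by fun_prop : Continuous fun ω : E3 => (κ, ω)))
  · intro p ω
    have h2 : HasDerivAt (fun p : ℝ => x + p • ω) ω p := by
      simpa using ((hasDerivAt_id p).smul_const ω).const_add x
    exact ((hd s ω (x + p • ω)).comp_hasDerivAt p h2).hasFDerivAt

lemma Iop_deriv_t (hH : 0 < H) {ct : ℝ → ℝ → ℝ} (hc : Continuous fun p : ℝ × ℝ => c p.1 p.2)
    (hct : Continuous fun p : ℝ × ℝ => ct p.1 p.2)
    (hcd : ∀ t s, HasDerivAt (fun t => c t s) (ct t s) t)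
    (hT : Continuous fun p : ℝ × E3 × E3 => T p.1 p.2.1 p.2.2)
    (hT' : Continuous fun p : ℝ × E3 × E3 => T' p.1 p.2.1 p.2.2)
    (hd : ∀ s ω y, HasFDerivAt (T s ω) (T' s ω y) y) (t : ℝ) (x : E3) :
    HasDerivAt (fun t => Iop H c T t x) (c t t • ∫ ω, T t ω x ∂sph + (Iop H ct T t x +
      Iop H (fun t s => Real.exp (-H * t) * c t s) (fun s ω y => T' s ω y ω) t x)) t := by
  have hT'w : Continuous fun p : ℝ × E3 × E3 => T' p.1 p.2.1 p.2.2 p.2.1 :=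
    hT'.clm_apply (by fun_prop)
  have hc2 : Continuous fun p : ℝ × ℝ => Real.exp (-H * p.1) * c p.1 p.2 := by fun_prop
  have hQ := (int_cont (H := H) hc hT).comp (by fun_prop : Continuous fun z : ℝ × ℝ => ((z.1, x), z.2))
  have hQ1 := (int_cont (H := H) hct hT).comp (by fun_prop : Continuous fun z : ℝ × ℝ => ((z.1, x), z.2))
  have hQ2 := (int_cont (H := H) (c := fun t s => Real.exp (-H * t) * c t s)
    (T := fun s ω y => T' s ω y ω) hc2 hT'w).comp (by fun_prop : Continuous fun z : ℝ × ℝ => ((z.1, x), z.2))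
  have := prim_hasDerivAt (Q := fun t s => c t s • ∫ ω, T s ω (x + kk H t s • ω) ∂sph)
    (Q' := fun t s => ct t s • ∫ ω, T s ω (x + kk H t s • ω) ∂sph +
      (Real.exp (-H * t) * c t s) • ∫ ω, T' s ω (x + kk H t s • ω) ω ∂sph)
    hQ (hQ1.add hQ2) ?_ t
  · refine this.congr_deriv ?_
    simp only [Iop]
    rw [intervalIntegral.integral_add]
    · simp [kk_self]
    · exact (hQ1.comp (by fun_prop : Continuous fun s : ℝ => (t, s))).intervalIntegrable _ _
    · exact (hQ2.comp (by fun_prop : Continuous fun s : ℝ => (t, s))).intervalIntegrable _ _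
  · intro t s
    have h1 := (mean_deriv_k hT hT' hd s (kk H t s) x).scomp t (kk_deriv hH t s)
    refine ((hcd t s).smul h1).congr_deriv ?_
    simp only [Function.comp, smul_smul]
    rw [add_comm, mul_comm]

lemma joint_deriv {φ : ℝ → E3 → F} {φt : ℝ → E3 → F} {φx : ℝ → E3 → E3 →L[ℝ] F}
    (ht : ∀ t x, HasDerivAt (fun t => φ t x) (φt t x) t)
    (hx : ∀ t x, HasFDerivAt (fun x => φ t x) (φx t x) x)
    (htc : Continuous fun p : ℝ × E3 => φt p.1 p.2)
    (hxc : Continuous fun p : ℝ × E3 => φx p.1 p.2) (p : ℝ × E3) :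
    HasFDerivAt (fun p : ℝ × E3 => φ p.1 p.2)
      ((ContinuousLinearMap.toSpanSingleton ℝ (φt p.1 p.2)).coprod (φx p.1 p.2)) p := by
  refine (hasStrictFDerivAt_uncurry_coprod (𝕜 := ℝ) (u := p) (f := φ)
    (f₁ := fun t x => ContinuousLinearMap.toSpanSingleton ℝ (φt t x)) (f₂ := φx)
    (Eventually.of_forall fun v => (ht _ _).hasFDerivAt) (Eventually.of_forall fun v => hx _ _)
    ?_ ?_).hasFDerivAt
  · exact ((ContinuousLinearMap.toSpanSingletonCLE (𝕜 := ℝ) (E := F)).continuous.comp htc).continuousAt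
  · exact hxc.continuousAt

lemma joint_c1 {φ : ℝ → E3 → F} {φt : ℝ → E3 → F} {φx : ℝ → E3 → E3 →L[ℝ] F}
    (ht : ∀ t x, HasDerivAt (fun t => φ t x) (φt t x) t)
    (hx : ∀ t x, HasFDerivAt (fun x => φ t x) (φx t x) x)
    (htc : Continuous fun p : ℝ × E3 => φt p.1 p.2)
    (hxc : Continuous fun p : ℝ × E3 => φx p.1 p.2) :
    ContDiff ℝ 1 (fun p : ℝ × E3 => φ p.1 p.2) := by
  refine contDiff_one_iff_hasFDerivAt.2 ⟨_, ?_, joint_deriv ht hx htc hxc⟩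
  have h1 := (ContinuousLinearMap.toSpanSingletonCLE (𝕜 := ℝ) (E := F)).continuous.comp htc
  exact (ContinuousLinearMap.coprodEquivL ℝ ).continuous.comp (h1.prodMk hxc)

lemma joint_c2 {φ : ℝ → E3 → F} {φt : ℝ → E3 → F} {φx : ℝ → E3 → E3 →L[ℝ] F}
    (ht : ∀ t x, HasDerivAt (fun t => φ t x) (φt t x) t)
    (hx : ∀ t x, HasFDerivAt (fun x => φ t x) (φx t x) x)
    (htc : ContDiff ℝ 1 fun p : ℝ × E3 => φt p.1 p.2)
    (hxc : ContDiff ℝ 1 fun p : ℝ × E3 => φx p.1 p.2) :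
    ContDiff ℝ 2 (fun p : ℝ × E3 => φ p.1 p.2) := by
  refine (contDiff_succ_iff_hasFDerivAt (n := 1)).2 ⟨_, ?_, joint_deriv ht hx htc.continuous hxc.continuous⟩
  have h1 := (ContinuousLinearMap.toSpanSingletonCLE (𝕜 := ℝ) (E := F)).contDiff.comp htc
  exact (ContinuousLinearMap.coprodEquivL ℝ ).contDiff.comp (h1.prodMk hxc)

end Iop


def GG (H t s : ℝ) : ℝ := (Real.exp (-H * (t - s)) - Real.exp (-2 * H * (t - s))) / H
def G1 (H t s : ℝ) : ℝ := -Real.exp (-H * (t - s)) + 2 * Real.exp (-2 * H * (t - s))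
def G2 (H t s : ℝ) : ℝ := H * Real.exp (-H * (t - s)) - 4 * H * Real.exp (-2 * H * (t - s))

lemma GG_cont (H : ℝ) : Continuous fun p : ℝ × ℝ => GG H p.1 p.2 := by unfold GG; fun_prop
lemma G1_cont (H : ℝ) : Continuous fun p : ℝ × ℝ => G1 H p.1 p.2 := by unfold G1; fun_prop
lemma G2_cont (H : ℝ) : Continuous fun p : ℝ × ℝ => G2 H p.1 p.2 := by unfold G2; fun_prop

lemma exp_deriv1 (a t s : ℝ) :
    HasDerivAt (fun t => Real.exp (a * (t - s))) (a * Real.exp (a * (t - s))) t := by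
  have := (((hasDerivAt_id t).sub_const s).const_mul a).exp
  refine this.congr_deriv ?_
  simp; ring

lemma exp_deriv0 (a t : ℝ) :
    HasDerivAt (fun t => Real.exp (a * t)) (a * Real.exp (a * t)) t := by
  simpa using exp_deriv1 a t 0

lemma GG_deriv {H : ℝ} (hH : 0 < H) (t s : ℝ) :
    HasDerivAt (fun t => GG H t s) (G1 H t s) t := by
  unfold GG G1
  refine (((exp_deriv1 (-H) t s).sub (exp_deriv1 (-2*H) t s)).div_const H).congr_deriv ?_
  field_simp; ring

lemma G1_deriv (H : ℝ) (t s : ℝ) :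
    HasDerivAt (fun t => G1 H t s) (G2 H t s) t := by
  unfold G1 G2
  refine (((exp_deriv1 (-H) t s).neg).add ((exp_deriv1 (-2*H) t s).const_mul 2)).congr_deriv ?_
  ring

lemma eG_deriv {H : ℝ} (hH : 0 < H) (t s : ℝ) :
    HasDerivAt (fun t => Real.exp (-H * t) * GG H t s)
      (Real.exp (-H * t) * (G1 H t s - H * GG H t s)) t := by
  refine ((exp_deriv0 (-H) t).mul (GG_deriv hH t s)).congr_deriv ?_
  ring

lemma int_comb {n : ℕ} (a : Fin n → ℝ) (q : Fin n → ℝ → ℝ) (hq : ∀ i, Continuous (q i))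
    (h : ∀ s, ∑ i, a i * q i s = 0) (t : ℝ) : ∑ i, a i * ∫ s in (0:ℝ)..t, q i s = 0 := by
  have : ∀ i, a i * ∫ s in (0:ℝ)..t, q i s = ∫ s in (0:ℝ)..t, a i * q i s := fun i => by
    rw [intervalIntegral.integral_const_mul]
  simp only [this]
  rw [← intervalIntegral.integral_finsetSum]
  · simp [h]
  · intro i _
    exact ((hq i).const_mul _ |>.intervalIntegrable _ _)

section duh
variable {H : ℝ} {S : ℝ → E3 → ℝ} {S' : ℝ → E3 → E3 →L[ℝ] ℝ}
  {S'' : ℝ → E3 → E3 →L[ℝ] E3 →L[ℝ] ℝ}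

def Duh {F : Type*} [NormedAddCommGroup F] [NormedSpace ℝ F] (H : ℝ) (S : ℝ → E3 → F) :
    ℝ → E3 → F := Iop H (GG H) (fun s _ y => S s y)

lemma coef_id (H t s : ℝ) (hH : 0 < H) : Real.exp (-H * t) * (Real.exp (-H * t) * GG H t s) =
    (Real.exp (-3 * H * t + 2 * H * s)) * kk H t s := by
  unfold GG kk
  have e1 : Real.exp (-H * (t - s)) = Real.exp (-H * t) * Real.exp (H * s) := by
    rw [← Real.exp_add]; ring_nf
  have e2 : Real.exp (-2 * H * (t - s)) = Real.exp (-H * t) ^ 2 * Real.exp (H * s) ^ 2 := by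
    rw [← Real.exp_nat_mul, ← Real.exp_nat_mul, ← Real.exp_add]; push_cast; ring_nf
  have e3 : Real.exp (-3 * H * t + 2 * H * s) = Real.exp (-H * t) ^ 3 * Real.exp (H * s) ^ 2 := by
    rw [← Real.exp_nat_mul, ← Real.exp_nat_mul, ← Real.exp_add]; push_cast; ring_nf
  have e4 : Real.exp (-H * s) = (Real.exp (H * s))⁻¹ := by rw [← Real.exp_neg]; ring_nf
  rw [e1, e2, e3, e4]
  have := Real.exp_pos (H * s)
  field_simp

lemma coef_id2 (H t s : ℝ) (hH : 0 < H) :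
    Real.exp (-H * t) * G1 H t s + Real.exp (-H * t) * (G1 H t s - H * GG H t s)
      + 3 * H * (Real.exp (-H * t) * GG H t s) = 2 * Real.exp (-3 * H * t + 2 * H * s) := by
  have e3 : Real.exp (-3 * H * t + 2 * H * s) =
    Real.exp (-H * t) * Real.exp (-2 * H * (t - s)) := by
    rw [← Real.exp_add]; ring_nf
  rw [e3]
  unfold GG G1
  field_simp; ring

lemma Duh_spec (hH : 0 < H) (hS : Continuous fun p : ℝ × E3 => S p.1 p.2)
    (hS' : Continuous fun p : ℝ × E3 => S' p.1 p.2)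
    (hS'' : Continuous fun p : ℝ × E3 => S'' p.1 p.2)
    (h1 : ∀ s y, HasFDerivAt (S s) (S' s y) y) (h2 : ∀ s y, HasFDerivAt (S' s) (S'' s y) y) :
    ContDiff ℝ 2 (fun p : ℝ × E3 => Duh H S p.1 p.2) ∧
    (∀ t x, HasFDerivAt (fun x => Duh H S t x) (Duh H S' t x) x) ∧
    (∀ t x, HasFDerivAt (fun x => Duh H S' t x) (Duh H S'' t x) x) ∧
    ∃ φt φtt : ℝ → E3 → ℝ, (∀ t x, HasDerivAt (fun t => Duh H S t x) (φt t x) t) ∧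
      (∀ t x, HasDerivAt (fun t => φt t x) (φtt t x) t) ∧ (∀ x, φt 0 x = 0) ∧
      ∀ t x, φtt t x + 3 * H * φt t x + 2 * H ^ 2 * Duh H S t x
        - Real.exp (-2 * H * t) * ∑ i, Duh H S'' t x (bv i) (bv i) = S t x := by
  have cS : Continuous fun p : ℝ × E3 × E3 => S p.1 p.2.2 :=
    hS.comp (by fun_prop : Continuous fun p : ℝ × E3 × E3 => (p.1, p.2.2))
  have cS' : Continuous fun p : ℝ × E3 × E3 => S' p.1 p.2.2 :=
    hS'.comp (by fun_prop : Continuous fun p : ℝ × E3 × E3 => (p.1, p.2.2))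
  have cS'' : Continuous fun p : ℝ × E3 × E3 => S'' p.1 p.2.2 :=
    hS''.comp (by fun_prop : Continuous fun p : ℝ × E3 × E3 => (p.1, p.2.2))
  have cSw : Continuous fun p : ℝ × E3 × E3 => S' p.1 p.2.2 p.2.1 := cS'.clm_apply (by fun_prop)
  have cSf : Continuous fun p : ℝ × E3 × E3 => (S'' p.1 p.2.2).flip p.2.1 :=
    ((ContinuousLinearMap.flipₗᵢ ℝ E3 E3 ℝ).continuous.comp cS'').clm_apply (by fun_prop)
  have cS'w : Continuous fun p : ℝ × E3 × E3 => S'' p.1 p.2.2 p.2.1 := cS''.clm_apply (by fun_prop)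
  have cSww : Continuous fun p : ℝ × E3 × E3 => S'' p.1 p.2.2 p.2.1 p.2.1 :=
    cS'w.clm_apply (by fun_prop)
  have cD : Continuous fun p : ℝ × E3 × E3 => ∑ i, S'' p.1 p.2.2 (bv i) (bv i) := by
    refine continuous_finsetSum _ fun i _ => ?_
    exact (cS''.clm_apply continuous_const).clm_apply continuous_const
  have hSw : ∀ s ω y, HasFDerivAt (fun y => S' s y ω) ((S'' s y).flip ω) y := by
    intro s ω y
    have := (h2 s y).clm_apply (hasFDerivAt_const ω y)
    refine this.congr_fderiv ?_
    ext; simp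
  have cG := GG_cont H
  have cG1 := G1_cont H
  have cG2 := G2_cont H
  have ceG : Continuous fun p : ℝ × ℝ => Real.exp (-H * p.1) * GG H p.1 p.2 := by fun_prop
  have ceG' : Continuous fun p : ℝ × ℝ =>
    Real.exp (-H * p.1) * (G1 H p.1 p.2 - H * GG H p.1 p.2) := by fun_prop
  have ceeG : Continuous fun p : ℝ × ℝ =>
    Real.exp (-H * p.1) * (Real.exp (-H * p.1) * GG H p.1 p.2) := by fun_prop
  have ceG1 : Continuous fun p : ℝ × ℝ => Real.exp (-H * p.1) * G1 H p.1 p.2 := by fun_prop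
  have G0 : ∀ t, GG H t t = 0 := fun t => by simp [GG]
  have G10 : ∀ t, G1 H t t = 1 := fun t => by norm_num [G1]
  -- first derivatives
  have dx := Iop_deriv_x (H := H) cG cS cS' (fun s _ y => h1 s y)
  have dxx := Iop_deriv_x (H := H) cG cS' cS'' (fun s _ y => h2 s y)
  have dt := Iop_deriv_t (H := H) hH cG cG1 (GG_deriv hH) cS cS' (fun s _ y => h1 s y)
  have dxt := Iop_deriv_t (H := H) hH cG cG1 (GG_deriv hH) cS' cS'' (fun s _ y => h2 s y)
  have dt1x := Iop_deriv_x (H := H) cG1 cS cS' (fun s _ y => h1 s y)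
  have dt2x := Iop_deriv_x (H := H) (c := fun t s => Real.exp (-H * t) * GG H t s) (T := fun s ω y => S' s y ω)
    (T' := fun s ω y => (S'' s y).flip ω) ceG cSw cSf hSw
  have dt1t := Iop_deriv_t (H := H) hH cG1 cG2 (G1_deriv H) cS cS' (fun s _ y => h1 s y)
  have dt2t := Iop_deriv_t (H := H) (c := fun t s => Real.exp (-H * t) * GG H t s)
    (ct := fun t s => Real.exp (-H * t) * (G1 H t s - H * GG H t s)) (T := fun s ω y => S' s y ω)
    (T' := fun s ω y => (S'' s y).flip ω) hH ceG ceG' (eG_deriv hH) cSw cSf hSw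
  have dφt : ∀ t x, HasDerivAt (fun t => Duh H S t x) (Iop H (G1 H) (fun s _ y => S s y) t x +
      Iop H (fun t s => Real.exp (-H * t) * GG H t s) (fun s ω y => S' s y ω) t x) t := by
    intro t x
    refine (dt t x).congr_deriv ?_
    rw [G0, zero_smul, zero_add]
  have kφt : ContDiff ℝ 1 (fun p : ℝ × E3 => Iop H (G1 H) (fun s _ y => S s y) p.1 p.2 +
      Iop H (fun t s => Real.exp (-H * t) * GG H t s) (fun s ω y => S' s y ω) p.1 p.2) := by
    refine joint_c1 (φ := fun t x => Iop H (G1 H) (fun s _ y => S s y) t x +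
      Iop H (fun t s => Real.exp (-H * t) * GG H t s) (fun s ω y => S' s y ω) t x)
      (fun t x => (dt1t t x).add (dt2t t x)) (fun t x => (dt1x t x).add (dt2x t x)) ?_ ?_
    · have a1 := (cG1.comp (by fun_prop : Continuous fun p : ℝ × E3 => (p.1, p.1))).smul
        (sph_continuous (T := fun p : ℝ × E3 => fun _ => S p.1 p.2) (cS.comp (by fun_prop : Continuous fun p : (ℝ × E3) × E3 => (p.1.1, p.2, p.1.2))))
      have a2 := (ceG.comp (by fun_prop : Continuous fun p : ℝ × E3 => (p.1, p.1))).smul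
        (sph_continuous (T := fun p : ℝ × E3 => fun ω => S' p.1 p.2 ω) (cSw.comp (by fun_prop : Continuous fun p : (ℝ × E3) × E3 => (p.1.1, p.2, p.1.2))))
      exact (a1.add ((Iop_cont cG2 cS).add (Iop_cont ceG1 cSw))).add
        (a2.add ((Iop_cont ceG' cSw).add (Iop_cont ceeG cSww)))
    · exact (Iop_cont cG1 cS').add (Iop_cont ceG cSf)
  have kφx : ContDiff ℝ 1 (fun p : ℝ × E3 => Iop H (GG H) (fun s _ y => S' s y) p.1 p.2) := by
    refine joint_c1 (φ := fun t x => Iop H (GG H) (fun s _ y => S' s y) t x)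
      (fun t x => (dxt t x)) (fun t x => dxx t x) ?_ ?_
    · have a1 := (cG.comp (by fun_prop : Continuous fun p : ℝ × E3 => (p.1, p.1))).smul
        (sph_continuous (T := fun p : ℝ × E3 => fun _ => S' p.1 p.2) (cS'.comp (by fun_prop : Continuous fun p : (ℝ × E3) × E3 => (p.1.1, p.2, p.1.2))))
      exact a1.add ((Iop_cont cG1 cS').add (Iop_cont ceG cS'w))
    · exact (Iop_cont cG cS'')
  refine ⟨joint_c2 dφt dx kφt kφx, dx, dxx, _, _, dφt, fun t x => (dt1t t x).add (dt2t t x), ?_, ?_⟩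
  · intro x; simp [Iop]
  · intro t x
    have hsum : ∑ i, Duh H S'' t x (bv i) (bv i) =
        Iop H (GG H) (fun s _ y => ∑ i, S'' s y (bv i) (bv i)) t x := by
      have := clm_intervalIntegral_smul (H := H) (T := fun s _ y => S'' s y) (∑ i : Fin 3, (ContinuousLinearMap.apply ℝ ℝ (bv i)).comp
        (ContinuousLinearMap.apply ℝ (E3 →L[ℝ] ℝ) (bv i))) cG cS'' t x
      simpa [sum_apply, Duh] using this
    rw [hsum]
    have hq : ∀ (c : ℝ → ℝ → ℝ) (T : ℝ → E3 → E3 → ℝ), 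
        (Continuous fun p : ℝ × ℝ => c p.1 p.2) →
        (Continuous fun p : ℝ × E3 × E3 => T p.1 p.2.1 p.2.2) →
        Continuous fun s => c t s • ∫ ω, T s ω (x + kk H t s • ω) ∂sph := fun c T hc hT =>
      (int_cont hc hT).comp (by fun_prop : Continuous fun s : ℝ => ((t, x), s))
    let q : (ℝ → ℝ → ℝ) → (ℝ → E3 → E3 → ℝ) → ℝ → ℝ := fun c T s =>
      c t s • ∫ ω, T s ω (x + kk H t s • ω) ∂sph
    have key := int_comb ![1, 1, 1, 1, 3 * H, 3 * H, 2 * H ^ 2, -Real.exp (-2 * H * t)]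
      ![q (G2 H) (fun s _ y => S s y),
        q (fun t s => Real.exp (-H * t) * G1 H t s) (fun s ω y => S' s y ω),
        q (fun t s => Real.exp (-H * t) * (G1 H t s - H * GG H t s)) (fun s ω y => S' s y ω),
        q (fun t s => Real.exp (-H * t) * (Real.exp (-H * t) * GG H t s)) (fun s ω y => S'' s y ω ω),
        q (G1 H) (fun s _ y => S s y),
        q (fun t s => Real.exp (-H * t) * GG H t s) (fun s ω y => S' s y ω),
        q (GG H) (fun s _ y => S s y),
        q (GG H) (fun s _ y => ∑ i, S'' s y (bv i) (bv i))] (fun i => by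
        fin_cases i
        · exact hq (G2 H) (fun s _ y => S s y) cG2 cS
        · exact hq (fun t s => Real.exp (-H * t) * G1 H t s) (fun s ω y => S' s y ω) ceG1 cSw
        · exact hq (fun t s => Real.exp (-H * t) * (G1 H t s - H * GG H t s)) (fun s ω y => S' s y ω) ceG' cSw
        · exact hq (fun t s => Real.exp (-H * t) * (Real.exp (-H * t) * GG H t s)) (fun s ω y => S'' s y ω ω) ceeG cSww
        · exact hq (G1 H) (fun s _ y => S s y) cG1 cS
        · exact hq (fun t s => Real.exp (-H * t) * GG H t s) (fun s ω y => S' s y ω) ceG cSw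
        · exact hq (GG H) (fun s _ y => S s y) cG cS
        · exact hq (GG H) (fun s _ y => ∑ i, S'' s y (bv i) (bv i)) cG cD) ?_ t
    · simp [Fin.sum_univ_eight, q] at key
      simp only [G0, G10, Iop, Duh]
      simp
      linear_combination key
    · intro s
      have d := darboux (h2 s) (hS''.comp (by fun_prop : Continuous fun y : E3 => (s, y))) x (kk H t s)
      simp [Fin.sum_univ_eight, q]
      have c1 := coef_id H t s hH
      have c2 := coef_id2 H t s hH
      have c3 : Real.exp (-2 * H * t) = Real.exp (-H * t) * Real.exp (-H * t) := by
        rw [← Real.exp_add]; ring_nf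
      have c4 : G2 H t s + 3 * H * G1 H t s + 2 * H ^ 2 * GG H t s = 0 := by
        unfold G2 G1 GG; field_simp; ring
      simp only [neg_mul] at *
      rw [c3]
      linear_combination (∫ ω, S s (x + kk H t s • ω) ∂sph) * c4 +
        (∫ ω, S' s (x + kk H t s • ω) ω ∂sph) * c2 + 
        ((∫ ω, S'' s (x + kk H t s • ω) ω ω ∂sph) -
          ∫ ω, (∑ i, S'' s (x + kk H t s • ω) (bv i) (bv i)) ∂sph) * c1
          - Real.exp (-(3 * H * t) + 2 * H * s) * d

end duh


/-! ### Weighted estimates and fixed points -/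

def K0 (H : ℝ) : ℝ := 16 / (45 * H ^ 2)

lemma K0_pos {H : ℝ} (hH : 0 < H) : 0 < K0 H := by unfold K0; positivity

lemma GG_nonneg {H : ℝ} (hH : 0 < H) {t s : ℝ} (h : s ≤ t) : 0 ≤ GG H t s := by
  unfold GG
  apply div_nonneg _ hH.le
  rw [sub_nonneg, Real.exp_le_exp]
  nlinarith

lemma GG_int {H : ℝ} (hH : 0 < H) {μ t : ℝ} (hμ : H / 4 ≤ μ) (ht : 0 ≤ t) :
    ∫ s in (0:ℝ)..t, GG H t s * Real.exp (μ * s) ≤ K0 H * Real.exp (μ * t) := by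
  have hμ0 : 0 < μ := by linarith
  set A : ℝ → ℝ := fun s => (Real.exp (-H * t + (H + μ) * s) / (H + μ) -
    Real.exp (-2 * H * t + (2 * H + μ) * s) / (2 * H + μ)) / H with hA
  have hd : ∀ s, HasDerivAt A (GG H t s * Real.exp (μ * s)) s := by
    intro s
    have e : ∀ a b : ℝ, HasDerivAt (fun s => Real.exp (a + b * s)) (b * Real.exp (a + b * s)) s := by
      intro a b
      have := (((hasDerivAt_id s).const_mul b).const_add a).exp
      refine this.congr_deriv ?_
      simp; ring
    have := (((e (-H * t) (H + μ)).div_const (H + μ)).sub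
      ((e (-2 * H * t) (2 * H + μ)).div_const (2 * H + μ))).div_const H
    refine this.congr_deriv ?_
    unfold GG
    have e1 : Real.exp (-H * t + (H + μ) * s) = Real.exp (-H * (t - s)) * Real.exp (μ * s) := by
      rw [← Real.exp_add]; ring_nf
    have e2 : Real.exp (-2 * H * t + (2 * H + μ) * s) =
        Real.exp (-2 * H * (t - s)) * Real.exp (μ * s) := by
      rw [← Real.exp_add]; ring_nf
    rw [e1, e2]
    field_simp
  rw [intervalIntegral.integral_eq_sub_of_hasDerivAt (fun s _ => hd s)
    (Continuous.intervalIntegrable (by unfold GG; fun_prop) _ _)]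
  have h0 : 0 ≤ A 0 := by
    simp only [hA]
    apply div_nonneg _ hH.le
    rw [sub_nonneg]
    apply div_le_div₀ (Real.exp_pos _).le _ (by positivity) (by linarith)
    rw [Real.exp_le_exp]; nlinarith
  have h1 : A t = Real.exp (μ * t) / ((H + μ) * (2 * H + μ)) := by
    simp only [hA]
    rw [show -H * t + (H + μ) * t = μ * t by ring, show -2 * H * t + (2 * H + μ) * t = μ * t by ring]
    field_simp; ring
  have h2 : 1 / ((H + μ) * (2 * H + μ)) ≤ K0 H := by
    unfold K0
    rw [div_le_div_iff₀ (by positivity) (by positivity)]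
    nlinarith
  have h3 : A t ≤ K0 H * Real.exp (μ * t) := by
    rw [h1, div_eq_mul_one_div, mul_comm]
    exact mul_le_mul_of_nonneg_right h2 (Real.exp_pos _).le
  linarith

section fix
variable {F : Type*} [NormedAddCommGroup F] [NormedSpace ℝ F]

lemma Duh_bound {H : ℝ} (hH : 0 < H) {μ t c : ℝ} (hμ : H / 4 ≤ μ) (ht : 0 ≤ t) {S : ℝ → E3 → F}
    (hS : ∀ s, 0 ≤ s → ∀ y, ‖S s y‖ ≤ c * Real.exp (μ * s)) (x : E3) :
    ‖Duh H S t x‖ ≤ c * K0 H * Real.exp (μ * t) := by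
  have hc : 0 ≤ c := by
    have := (norm_nonneg _).trans (hS 0 le_rfl 0)
    simpa using this
  unfold Duh Iop
  have h1 := intervalIntegral.norm_integral_le_of_norm_le (μ := volume) (a := 0) (b := t)
    (f := fun s => GG H t s • ∫ ω, S s (x + kk H t s • ω) ∂sph)
    (g := fun s => c * (GG H t s * Real.exp (μ * s))) ht ?_ ?_
  · refine h1.trans ?_
    rw [intervalIntegral.integral_const_mul, mul_assoc]
    exact mul_le_mul_of_nonneg_left (GG_int hH hμ ht) hc
  · refine Eventually.of_forall fun s hs => ?_
    rw [norm_smul, Real.norm_of_nonneg (GG_nonneg hH hs.2)]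
    have := sph_norm_le (T := fun ω => S s (x + kk H t s • ω)) (c := c * Real.exp (μ * s))
      (fun ω _ => hS s hs.1.le _)
    calc _ ≤ GG H t s * (c * Real.exp (μ * s)) :=
          mul_le_mul_of_nonneg_left this (GG_nonneg hH hs.2)
      _ = _ := by ring
  · exact Continuous.intervalIntegrable (by unfold GG; fun_prop) _ _

lemma Duh_cont {H : ℝ} {S : ℝ → E3 → F} (hS : Continuous fun p : ℝ × E3 => S p.1 p.2) :
    Continuous fun p : ℝ × E3 => Duh H S p.1 p.2 :=
  Iop_cont (GG_cont H) (hS.comp (by fun_prop : Continuous fun p : ℝ × E3 × E3 => (p.1, p.2.2)))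

lemma Duh_sub {H : ℝ} {S T : ℝ → E3 → F} (hS : Continuous fun p : ℝ × E3 => S p.1 p.2)
    (hT : Continuous fun p : ℝ × E3 => T p.1 p.2) (t : ℝ) (x : E3) :
    Duh H S t x - Duh H T t x = Duh H (fun s y => S s y - T s y) t x := by
  have c : ∀ {S : ℝ → E3 → F}, (Continuous fun p : ℝ × E3 => S p.1 p.2) →
      Continuous fun s => GG H t s • ∫ ω, S s (x + kk H t s • ω) ∂sph := fun {S} hS =>
    (int_cont (T := fun s _ y => S s y) (GG_cont H) 
      (hS.comp (by fun_prop : Continuous fun p : ℝ × E3 × E3 => (p.1, p.2.2)))).comp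
        (by fun_prop : Continuous fun s : ℝ => ((t, x), s))
  unfold Duh Iop
  rw [← intervalIntegral.integral_sub ((c hS).intervalIntegrable _ _) ((c hT).intervalIntegrable _ _)]
  apply intervalIntegral.integral_congr
  intro s _
  simp only
  rw [← smul_sub, ← integral_sub]
  · exact sph_integrable (hS.comp (by fun_prop : Continuous fun ω : E3 => (s, x + kk H t s • ω)))
  · exact sph_integrable (hT.comp (by fun_prop : Continuous fun ω : E3 => (s, x + kk H t s • ω)))

lemma Duh_sub_bound {H : ℝ} (hH : 0 < H) {μ t c : ℝ} (hμ : H / 4 ≤ μ) (ht : 0 ≤ t)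
    {S T : ℝ → E3 → F} (hS : Continuous fun p : ℝ × E3 => S p.1 p.2)
    (hT : Continuous fun p : ℝ × E3 => T p.1 p.2)
    (h : ∀ s, 0 ≤ s → ∀ y, ‖S s y - T s y‖ ≤ c * Real.exp (μ * s)) (x : E3) :
    ‖Duh H S t x - Duh H T t x‖ ≤ c * K0 H * Real.exp (μ * t) := by
  rw [Duh_sub hS hT]
  exact Duh_bound hH hμ ht h x

lemma lim_cont {X : Type*} [TopologicalSpace X] {u : ℕ → X → F} {w : X → F} {d : ℕ → ℝ} {b : X → ℝ}
    (hu : ∀ n, Continuous (u n)) (hb : Continuous b) (hd : Tendsto d atTop (𝓝 0))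
    (h : ∀ n x, ‖u n x - w x‖ ≤ d n * b x) : Continuous w := by
  have : TendstoLocallyUniformly u w atTop := by
    rw [Metric.tendstoLocallyUniformly_iff]
    intro ε hε x
    refine ⟨{y | |b y| < |b x| + 1}, ?_, ?_⟩
    · exact (isOpen_lt (by fun_prop) (by fun_prop)).mem_nhds (by simp)
    · have h1 : Tendsto (fun n => |d n| * (|b x| + 1)) atTop (𝓝 0) := by
        simpa using hd.abs.mul_const (|b x| + 1)
      filter_upwards [h1.eventually (gt_mem_nhds hε)] with n hn y hy
      rw [dist_comm, dist_eq_norm]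
      refine (h n y).trans_lt (lt_of_le_of_lt ?_ hn)
      calc d n * b y ≤ |d n * b y| := le_abs_self _
        _ = |d n| * |b y| := abs_mul _ _
        _ ≤ _ := mul_le_mul_of_nonneg_left (le_of_lt hy) (abs_nonneg _)
  exact this.continuous (Frequently.of_forall hu)

def pic (H : ℝ) (R : ℝ → E3 → F → F) : ℕ → ℝ → E3 → F
  | 0 => fun _ _ => 0
  | n + 1 => fun t x => Duh H (fun s y => R s y (pic H R n s y)) (max t 0) x

lemma R_cont {R : ℝ → E3 → F → F} (hR : Continuous fun p : ℝ × E3 × F => R p.1 p.2.1 p.2.2)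
    {w : ℝ → E3 → F} (hw : Continuous fun p : ℝ × E3 => w p.1 p.2) :
    Continuous fun p : ℝ × E3 => R p.1 p.2 (w p.1 p.2) :=
  hR.comp (by fun_prop : Continuous fun p : ℝ × E3 => (p.1, p.2, w p.1 p.2))

lemma Duhp_cont {H : ℝ} {S : ℝ → E3 → F} (hS : Continuous fun p : ℝ × E3 => S p.1 p.2) :
    Continuous fun p : ℝ × E3 => Duh H S (max p.1 0) p.2 :=
  (Duh_cont hS).comp (by fun_prop : Continuous fun p : ℝ × E3 => (max p.1 0, p.2))

lemma pic_cont {H : ℝ} {R : ℝ → E3 → F → F}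
    (hR : Continuous fun p : ℝ × E3 × F => R p.1 p.2.1 p.2.2) (n : ℕ) :
    Continuous fun p : ℝ × E3 => pic H R n p.1 p.2 := by
  induction n with
  | zero => exact continuous_const
  | succ n ih => exact Duhp_cont (R_cont hR ih)

/-- One contraction step. -/
lemma contr {H : ℝ} (hH : 0 < H) {μ : ℝ} (hμ : H / 4 ≤ μ) {R : ℝ → E3 → F → F}
    (hR : Continuous fun p : ℝ × E3 × F => R p.1 p.2.1 p.2.2)
    (hL : ∀ s, 0 ≤ s → ∀ y v v', ‖R s y v - R s y v'‖ ≤ 5 / 2 * H ^ 2 * ‖v - v'‖)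
    {w w' : ℝ → E3 → F} (hw : Continuous fun p : ℝ × E3 => w p.1 p.2)
    (hw' : Continuous fun p : ℝ × E3 => w' p.1 p.2) {d : ℝ}
    (h : ∀ t x, ‖w t x - w' t x‖ ≤ d * Real.exp (μ * max t 0)) (t : ℝ) (x : E3) :
    ‖Duh H (fun s y => R s y (w s y)) (max t 0) x - Duh H (fun s y => R s y (w' s y)) (max t 0) x‖
      ≤ d * (8 / 9) * Real.exp (μ * max t 0) := by
  have := Duh_sub_bound (S := fun s y => R s y (w s y)) (T := fun s y => R s y (w' s y)) hH hμ
    (le_max_right t 0) (R_cont hR hw) (R_cont hR hw')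
    (c := 5 / 2 * H ^ 2 * d) ?_ x
  · refine this.trans (le_of_eq ?_)
    unfold K0
    field_simp; ring
  · intro s hs y
    refine (hL s hs y _ _).trans ?_
    have h3 := h s y
    rw [max_eq_left hs] at h3
    have h4 := mul_le_mul_of_nonneg_left h3 (by positivity : 0 ≤ 5 / 2 * H ^ 2)
    linarith

lemma fix_unique {H : ℝ} (hH : 0 < H) {μ : ℝ} (hμ : H / 4 ≤ μ) {R : ℝ → E3 → F → F}
    (hR : Continuous fun p : ℝ × E3 × F => R p.1 p.2.1 p.2.2)
    (hL : ∀ s, 0 ≤ s → ∀ y v v', ‖R s y v - R s y v'‖ ≤ 5 / 2 * H ^ 2 * ‖v - v'‖)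
    {w w' : ℝ → E3 → F} (hw : Continuous fun p : ℝ × E3 => w p.1 p.2)
    (hw' : Continuous fun p : ℝ × E3 => w' p.1 p.2) 
    (hf : ∀ t x, w t x = Duh H (fun s y => R s y (w s y)) (max t 0) x)
    (hf' : ∀ t x, w' t x = Duh H (fun s y => R s y (w' s y)) (max t 0) x) {d : ℝ}
    (h : ∀ t x, ‖w t x - w' t x‖ ≤ d * Real.exp (μ * max t 0)) : w = w' := by
  have key : ∀ n : ℕ, ∀ t x, ‖w t x - w' t x‖ ≤ d * (8 / 9) ^ n * Real.exp (μ * max t 0) := by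
    intro n
    induction n with
    | zero => simpa using h
    | succ n ih =>
      intro t x
      rw [hf, hf']
      refine (contr hH hμ hR hL hw hw' ih t x).trans (le_of_eq ?_)
      ring
  ext t x
  have h1 : Tendsto (fun n : ℕ => d * (8 / 9 : ℝ) ^ n * Real.exp (μ * max t 0)) atTop (𝓝 0) := by
    have := ((tendsto_pow_atTop_nhds_zero_of_lt_one (r := (8/9:ℝ)) (by norm_num) (by norm_num)).const_mul
      d).mul_const (Real.exp (μ * max t 0))
    simpa using this
  have h2 := ge_of_tendsto' h1 (fun n => key n t x)
  exact sub_eq_zero.1 (norm_le_zero_iff.1 h2)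

lemma exists_fix [CompleteSpace F] {H : ℝ} (hH : 0 < H) {μ c : ℝ} (hμ : H / 4 ≤ μ)
    {R : ℝ → E3 → F → F}
    (hR : Continuous fun p : ℝ × E3 × F => R p.1 p.2.1 p.2.2)
    (hL : ∀ s, 0 ≤ s → ∀ y v v', ‖R s y v - R s y v'‖ ≤ 5 / 2 * H ^ 2 * ‖v - v'‖)
    (h0 : ∀ s, 0 ≤ s → ∀ y, ‖R s y 0‖ ≤ c * Real.exp (μ * s)) :
    ∃ w : ℝ → E3 → F, (Continuous fun p : ℝ × E3 => w p.1 p.2) ∧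
      (∀ t x, w t x = Duh H (fun s y => R s y (w s y)) (max t 0) x) ∧
      ∀ n t x, ‖pic H R n t x - w t x‖ ≤ 9 * K0 H * c * (8 / 9) ^ n * Real.exp (μ * max t 0) := by
  have step : ∀ n : ℕ, ∀ t x, ‖pic H R n t x - pic H R (n + 1) t x‖ ≤
      c * K0 H * (8 / 9) ^ n * Real.exp (μ * max t 0) := by
    intro n
    induction n with
    | zero =>
      intro t x
      have := Duh_bound hH hμ (le_max_right t 0) h0 x
      simpa [pic] using this
    | succ n ih =>
      intro t x
      refine (contr hH hμ hR hL (pic_cont hR n) (pic_cont hR (n + 1)) ih t x).trans (le_of_eq ?_)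
      ring
  have step' : ∀ t x n, dist (pic H R n t x) (pic H R (n + 1) t x) ≤
      (c * K0 H * Real.exp (μ * max t 0)) * (8 / 9) ^ n := by
    intro t x n
    rw [dist_eq_norm]
    refine (step n t x).trans (le_of_eq ?_); ring
  have hlim : ∀ t x, ∃ w, Tendsto (fun n => pic H R n t x) atTop (𝓝 w) := fun t x =>
    cauchySeq_tendsto_of_complete (cauchySeq_of_le_geometric _ _ (by norm_num) (step' t x))
  choose w hw using hlim
  have hb : ∀ n t x, ‖pic H R n t x - w t x‖ ≤
      9 * K0 H * c * (8 / 9) ^ n * Real.exp (μ * max t 0) := by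
    intro n t x
    rw [← dist_eq_norm]
    refine (dist_le_of_le_geometric_of_tendsto _ _ (by norm_num) (step' t x) (hw t x) n).trans
      (le_of_eq ?_)
    ring
  have hd : Tendsto (fun n : ℕ => 9 * K0 H * c * (8 / 9 : ℝ) ^ n) atTop (𝓝 0) := by
    simpa using ((tendsto_pow_atTop_nhds_zero_of_lt_one (r := (8/9:ℝ)) (by norm_num)
      (by norm_num)).const_mul (9 * K0 H * c))
  have hwc : Continuous fun p : ℝ × E3 => w p.1 p.2 :=
    lim_cont (u := fun n p => pic H R n p.1 p.2) (b := fun p => Real.exp (μ * max p.1 0))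
      (fun n => pic_cont hR n) (by fun_prop) hd (fun n p => hb n p.1 p.2)
  refine ⟨w, hwc, ?_, hb⟩
  intro t x
  have h1 := (hw t x).comp (tendsto_add_atTop_nat 1)
  refine tendsto_nhds_unique h1 ?_
  rw [tendsto_iff_norm_sub_tendsto_zero]
  refine squeeze_zero (fun _ => norm_nonneg _)
    (fun n => contr hH hμ hR hL (pic_cont hR n) hwc (hb n) t x) ?_
  simpa using (hd.mul_const (8/9)).mul_const (Real.exp (μ * max t 0))

end fix


section reg
variable {F : Type*} [NormedAddCommGroup F] [NormedSpace ℝ F]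

lemma lip_of_Rv {H : ℝ} {R : ℝ → E3 → F → F} {Ry : ℝ → E3 → F → E3 →L[ℝ] F}
    {Rv : ℝ → E3 → F → F →L[ℝ] F}
    (hd : ∀ s y v, HasFDerivAt (fun z : E3 × F => R s z.1 z.2) ((Ry s y v).coprod (Rv s y v)) (y, v))
    (hRv : ∀ s, 0 ≤ s → ∀ y v, ‖Rv s y v‖ ≤ 5 / 2 * H ^ 2) :
    ∀ s, 0 ≤ s → ∀ y v v', ‖R s y v - R s y v'‖ ≤ 5 / 2 * H ^ 2 * ‖v - v'‖ := by
  intro s hs y v v'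
  have h1 : ∀ v, HasFDerivAt (fun v => R s y v) (Rv s y v) v := by
    intro v
    have h2 : HasFDerivAt (fun v : F => (y, v)) ((0 : F →L[ℝ] E3).prod (ContinuousLinearMap.id ℝ F)) v :=
      (hasFDerivAt_const y v).prodMk (hasFDerivAt_id v)
    refine (HasFDerivAt.comp v (hd s y v) h2).congr_fderiv ?_
    ext z; simp
  exact Convex.norm_image_sub_le_of_norm_hasFDerivWithin_le (s := univ)
    (fun v _ => (h1 v).hasFDerivWithinAt) (fun v _ => hRv s hs y v) convex_univ trivial trivial

lemma regularity [CompleteSpace F] {H : ℝ} (hH : 0 < H) {μ c c1 B : ℝ} (hμ : H / 4 ≤ μ)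
    (hc : 0 ≤ c) (hc1 : 0 ≤ c1) (hB : 0 ≤ B)
    {R : ℝ → E3 → F → F} {Ry : ℝ → E3 → F → E3 →L[ℝ] F} {Rv : ℝ → E3 → F → F →L[ℝ] F}
    (hR : Continuous fun p : ℝ × E3 × F => R p.1 p.2.1 p.2.2)
    (hRyc : Continuous fun p : ℝ × E3 × F => Ry p.1 p.2.1 p.2.2)
    (hRvc : Continuous fun p : ℝ × E3 × F => Rv p.1 p.2.1 p.2.2)
    (hd : ∀ s y v, HasFDerivAt (fun z : E3 × F => R s z.1 z.2) ((Ry s y v).coprod (Rv s y v)) (y, v))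
    (hRv : ∀ s, 0 ≤ s → ∀ y v, ‖Rv s y v‖ ≤ 5 / 2 * H ^ 2)
    (h0 : ∀ s, 0 ≤ s → ∀ y, ‖R s y 0‖ ≤ c * Real.exp (μ * s))
    (hRy0 : ∀ s, 0 ≤ s → ∀ y, ‖Ry s y 0‖ ≤ c1 * Real.exp (2 * μ * s))
    (hRyL : ∀ s, 0 ≤ s → ∀ y v v', ‖Ry s y v - Ry s y v'‖ ≤ B * Real.exp (μ * s) * ‖v - v'‖)
    (hRvL : ∀ s, 0 ≤ s → ∀ y v v', ‖Rv s y v - Rv s y v'‖ ≤ B * ‖v - v'‖) :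
    ∃ w : ℝ → E3 → F, ∃ W : ℝ → E3 → E3 →L[ℝ] F, (Continuous fun p : ℝ × E3 => w p.1 p.2) ∧
      (∀ t x, w t x = Duh H (fun s y => R s y (w s y)) (max t 0) x) ∧
      (∀ n t x, ‖pic H R n t x - w t x‖ ≤ 9 * K0 H * c * (8 / 9) ^ n * Real.exp (μ * max t 0)) ∧
      (Continuous fun p : ℝ × E3 => W p.1 p.2) ∧
      (∀ t x, W t x = Duh H (fun s y => Ry s y (w s y) + (Rv s y (w s y)).comp (W s y)) (max t 0) x) ∧
      (∀ t x, HasFDerivAt (w t) (W t x) x) ∧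
      ∀ t x, ‖W t x‖ ≤ 9 * K0 H * (c1 + B * (9 * K0 H * c)) * Real.exp (2 * μ * max t 0) := by
  have hμ0 : 0 < μ := by linarith
  have hK := K0_pos hH
  obtain ⟨w, hw, hwf, hwb⟩ := exists_fix hH hμ hR (lip_of_Rv hd hRv) h0
  have hw0 : ∀ t x, ‖w t x‖ ≤ 9 * K0 H * c * Real.exp (μ * max t 0) := fun t x => by
    simpa [pic] using hwb 0 t x
  have cmp : ∀ {u : ℝ → E3 → F}, (Continuous fun p : ℝ × E3 => u p.1 p.2) →
      Continuous fun p : ℝ × E3 => (p.1, p.2, u p.1 p.2) := fun h => by fun_prop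
  -- the linearised equation
  set R' : ℝ → E3 → (E3 →L[ℝ] F) → (E3 →L[ℝ] F) :=
    fun s y v => Ry s y (w s y) + (Rv s y (w s y)).comp v with hR'
  have hR'c : Continuous fun p : ℝ × E3 × (E3 →L[ℝ] F) => R' p.1 p.2.1 p.2.2 := by
    have a1 : Continuous fun p : ℝ × E3 × (E3 →L[ℝ] F) => (p.1, p.2.1, w p.1 p.2.1) :=
      (cmp hw).comp (by fun_prop : Continuous fun p : ℝ × E3 × (E3 →L[ℝ] F) => (p.1, p.2.1))
    exact (hRyc.comp a1).add ((hRvc.comp a1).clm_comp (by fun_prop))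
  have hR'L : ∀ s, 0 ≤ s → ∀ y v v', ‖R' s y v - R' s y v'‖ ≤ 5 / 2 * H ^ 2 * ‖v - v'‖ := by
    intro s hs y v v'
    have : R' s y v - R' s y v' = (Rv s y (w s y)).comp (v - v') := by
      ext z; simp [hR']
    rw [this]
    exact (ContinuousLinearMap.opNorm_comp_le _ _).trans
      (mul_le_mul_of_nonneg_right (hRv s hs _ _) (norm_nonneg _))
  have hR'0 : ∀ s, 0 ≤ s → ∀ y, ‖R' s y 0‖ ≤
      (c1 + B * (9 * K0 H * c)) * Real.exp (2 * μ * s) := by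
    intro s hs y
    have e0 : R' s y 0 = Ry s y 0 + (Ry s y (w s y) - Ry s y 0) := by simp [hR']
    rw [e0]
    refine (norm_add_le _ _).trans ?_
    have a1 := hRyL s hs y (w s y) 0
    have a2 := hw0 s y
    rw [max_eq_left hs] at a2
    rw [sub_zero] at a1
    have a3 : Real.exp (2 * μ * s) = Real.exp (μ * s) * Real.exp (μ * s) := by
      rw [← Real.exp_add]; ring_nf
    have a4 := mul_le_mul_of_nonneg_left a2 (by positivity : 0 ≤ B * Real.exp (μ * s))
    have a5 := hRy0 s hs y
    rw [a3] at a5 ⊢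
    linarith
  have hμ2 : H / 4 ≤ 2 * μ := by linarith
  have hμ3 : H / 4 ≤ 3 * μ := by linarith
  obtain ⟨W, hW, hWf, hWb⟩ := exists_fix hH hμ2 hR'c hR'L hR'0
  have hW0 : ∀ t x, ‖W t x‖ ≤ 9 * K0 H * (c1 + B * (9 * K0 H * c)) * Real.exp (2 * μ * max t 0) :=
    fun t x => by simpa [pic] using hWb 0 t x
  refine ⟨w, W, hw, hwf, hwb, hW, hWf, ?_, hW0⟩
  set C := 9 * K0 H * (c1 + B * (9 * K0 H * c)) with hC
  have hC0 : 0 ≤ C := by positivity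
  set A := 9 * K0 H * c with hA
  have hA0 : 0 ≤ A := by positivity
  set D := 9 / 8 * K0 H * B * (1 + C) * A with hD
  -- derivative of the iterates
  have hV : ∀ n : ℕ, ∃ V : ℝ → E3 → E3 →L[ℝ] F, (Continuous fun p : ℝ × E3 => V p.1 p.2) ∧
      (∀ t x, HasFDerivAt (pic H R n t) (V t x) x) ∧
      ∀ t x, ‖V t x - W t x‖ ≤ ((8 / 9) ^ n * (C + n * D)) * Real.exp (3 * μ * max t 0) := by
    intro n
    induction n with
    | zero =>
      refine ⟨fun _ _ => 0, continuous_const, fun t x => hasFDerivAt_const _ _, fun t x => ?_⟩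
      simp only [zero_sub, norm_neg, pow_zero, Nat.cast_zero, zero_mul, add_zero, one_mul]
      refine (hW0 t x).trans (mul_le_mul_of_nonneg_left ?_ hC0)
      rw [Real.exp_le_exp]
      exact mul_le_mul_of_nonneg_right (by linarith) (le_max_right _ _)
    | succ n ih =>
      obtain ⟨V, hVc, hVd, hVb⟩ := ih
      have hpc := pic_cont (H := H) hR n
      set S' : ℝ → E3 → E3 →L[ℝ] F := fun s y => Ry s y (pic H R n s y) +
        (Rv s y (pic H R n s y)).comp (V s y) with hS'
      have hS'c : Continuous fun p : ℝ × E3 => S' p.1 p.2 :=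
        (hRyc.comp (cmp hpc)).add ((hRvc.comp (cmp hpc)).clm_comp hVc)
      refine ⟨fun t x => Duh H S' (max t 0) x, Duhp_cont hS'c, ?_, ?_⟩
      · intro t x
        refine Iop_deriv_x (T := fun s _ y => R s y (pic H R n s y)) (T' := fun s _ y => S' s y)
          (GG_cont H)
          ((R_cont hR hpc).comp (by fun_prop : Continuous fun p : ℝ × E3 × E3 => (p.1, p.2.2)))
          (hS'c.comp (by fun_prop : Continuous fun p : ℝ × E3 × E3 => (p.1, p.2.2))) ?_ (max t 0) x
        intro s _ y
        have h2 : HasFDerivAt (fun y : E3 => (y, pic H R n s y))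
            ((ContinuousLinearMap.id ℝ E3).prod (V s y)) y :=
          (hasFDerivAt_id y).prodMk (hVd s y)
        refine (HasFDerivAt.comp y (hd s y (pic H R n s y)) h2).congr_fderiv ?_
        ext z; simp [hS']
      · intro t x
        rw [hWf]
        have := Duh_sub_bound (S := S') (T := fun s y => R' s y (W s y)) hH hμ3 (le_max_right t 0)
          hS'c (R_cont hR'c hW)
          (c := 5 / 2 * H ^ 2 * ((8 / 9) ^ n * (C + n * D)) + B * (1 + C) * (A * (8 / 9) ^ n)) ?_ x
        · refine this.trans (le_of_eq ?_)
          congr 1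
          rw [hD]
          have : K0 H * (5 / 2 * H ^ 2) = 8 / 9 := by unfold K0; field_simp; norm_num
          push_cast
          rw [pow_succ]
          linear_combination ((8 / 9) ^ n * (C + n * (9 / 8 * K0 H * B * (1 + C) * A))) * this
        · intro s hs y
          have e0 : S' s y - R' s y (W s y) = (Ry s y (pic H R n s y) - Ry s y (w s y)) +
              (Rv s y (pic H R n s y)).comp (V s y - W s y) +
              (Rv s y (pic H R n s y) - Rv s y (w s y)).comp (W s y) := by
            ext z; simp [hS', hR']; abel
          rw [e0]
          have b1 := hRyL s hs y (pic H R n s y) (w s y)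
          have b2 := hRvL s hs y (pic H R n s y) (w s y)
          have b3 := hwb n s y
          have b4 := hVb s y
          have b5 := hW0 s y
          rw [max_eq_left hs] at b3 b4 b5
          have b6 := (ContinuousLinearMap.opNorm_comp_le (Rv s y (pic H R n s y)) (V s y - W s y)).trans
            (mul_le_mul (hRv s hs y _) b4 (norm_nonneg _) (by positivity))
          have b7 := (ContinuousLinearMap.opNorm_comp_le
            (Rv s y (pic H R n s y) - Rv s y (w s y)) (W s y)).trans
            (mul_le_mul (b2.trans (mul_le_mul_of_nonneg_left b3 hB)) b5 (norm_nonneg _)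
              (by positivity))
          have b8 := b1.trans (mul_le_mul_of_nonneg_left b3 (by positivity))
          refine (norm_add₃_le).trans ?_
          have e2 : Real.exp (2 * μ * s) = Real.exp (μ * s) ^ 2 := by
            rw [← Real.exp_nat_mul]; push_cast; ring_nf
          have e3 : Real.exp (3 * μ * s) = Real.exp (μ * s) ^ 3 := by
            rw [← Real.exp_nat_mul]; push_cast; ring_nf
          have e1 : 1 ≤ Real.exp (μ * s) := by
            rw [Real.one_le_exp_iff]; positivity
          rw [e3] at b6 ⊢
          rw [e2] at b7
          set E := Real.exp (μ * s)
          have b9 : B * E * (A * (8 / 9) ^ n * E) ≤ B * (A * (8 / 9) ^ n) * E ^ 3 := by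
            have : B * (A * (8 / 9) ^ n) * E ^ 3 - B * E * (A * (8 / 9) ^ n * E)
              = B * (A * (8 / 9) ^ n) * E ^ 2 * (E - 1) := by ring
            have : 0 ≤ B * (A * (8 / 9) ^ n) * E ^ 2 * (E - 1) := by
              have : 0 ≤ E - 1 := by linarith
              positivity
            linarith
          linear_combination b6 + b7 + b8 + b9
  choose V hVc hVd hVb using hV
  intro t
  refine hasFDerivAt_of_tendstoUniformly (f := fun n => pic H R n t) (f' := fun n => V n t)
    (l := atTop) ?_ (fun n x => hVd n t x) ?_
  · rw [Metric.tendstoUniformly_iff]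
    intro ε hε
    have h1 : Tendsto (fun n : ℕ => ((8 / 9 : ℝ) ^ n * (C + n * D)) * Real.exp (3 * μ * max t 0))
        atTop (𝓝 0) := by
      have a1 := (tendsto_pow_atTop_nhds_zero_of_lt_one (r := (8/9:ℝ)) (by norm_num)
        (by norm_num)).mul_const C
      have a2 := (tendsto_self_mul_const_pow_of_lt_one (r := (8/9:ℝ)) (by norm_num)
        (by norm_num)).mul_const D
      have a3 := (a1.add a2).mul_const (Real.exp (3 * μ * max t 0))
      simp only [zero_mul, add_zero] at a3
      refine a3.congr fun n => ?_
      ring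
    filter_upwards [h1.eventually (gt_mem_nhds hε)] with n hn x
    rw [dist_comm, dist_eq_norm]
    exact (hVb n t x).trans_lt hn
  · intro x
    rw [tendsto_iff_norm_sub_tendsto_zero]
    refine squeeze_zero (fun _ => norm_nonneg _) (fun n => hwb n t x) ?_
    simpa using (((tendsto_pow_atTop_nhds_zero_of_lt_one (r := (8/9:ℝ)) (by norm_num)
      (by norm_num)).const_mul A).mul_const (Real.exp (μ * max t 0)))

end reg


/-! ### The semilinear problem with small Lipschitz constant -/

lemma lip_of_deriv {f f1 : ℝ → ℝ} {b : ℝ} (hf1 : ∀ s, HasDerivAt f (f1 s) s) (h : ∀ s, |f1 s| ≤ b)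
    (s s' : ℝ) : |f s - f s'| ≤ b * |s - s'| :=
  Convex.norm_image_sub_le_of_norm_hasDerivWithin_le (s := univ)
    (fun v _ => (hf1 v).hasDerivWithinAt) (fun v _ => h v) convex_univ trivial trivial

def Cst (H D B : ℝ) : ℝ :=
  let c := H ^ 2 / 2 * D + D
  let C1 := 9 * K0 H * (c + B * (D + 1) * (9 * K0 H * c))
  9 * K0 H * ((B * (D + C1) * D + c) + B * (D + C1) * (9 * K0 H * c))

def RR (H : ℝ) (f : ℝ → ℝ) (Ψ P : ℝ → E3 → ℝ) (s : ℝ) (y : E3) (v : ℝ) : ℝ :=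
  2 * H ^ 2 * v - f (Ψ s y + v) + P s y

lemma one_le_exp' {μ s : ℝ} (h1 : 0 ≤ μ) (h2 : 0 ≤ s) : 1 ≤ Real.exp (μ * s) := by
  rw [Real.one_le_exp_iff]; positivity

lemma nRv {H a : ℝ} (ha : |a| ≤ H ^ 2 / 2) : |2 * H ^ 2 - a| ≤ 5 / 2 * H ^ 2 := by
  rw [abs_le] at *
  constructor <;> nlinarith [sq_nonneg H, ha.1, ha.2]

section gen
variable {G : Type*} [NormedAddCommGroup G] [NormedSpace ℝ G]

lemma gen_bound {a b D : ℝ} {A Q : G} (hb : 0 ≤ b) (ha : |a| ≤ b) (hA : ‖A‖ ≤ D) (hQ : ‖Q‖ ≤ D) :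
    ‖-(a • A) + Q‖ ≤ b * D + D := by
  refine (norm_add_le _ _).trans ?_
  rw [norm_neg, norm_smul]
  exact add_le_add (mul_le_mul ha hA (norm_nonneg _) hb) hQ

lemma gen_diff (a b : ℝ) (A Q : G) :
    ‖(-(a • A) + Q) - (-(b • A) + Q)‖ = |a - b| * ‖A‖ := by
  have : (-(a • A) + Q) - (-(b • A) + Q) = -((a - b) • A) := by module
  rw [this, norm_neg, norm_smul, Real.norm_eq_abs]

lemma gen_cont {X : Type*} [TopologicalSpace X] {a : X → ℝ} {A Q : X → G} (ha : Continuous a)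
    (hA : Continuous A) (hQ : Continuous Q) : Continuous fun x => -(a x • A x) + Q x :=
  (ha.smul hA).neg.add hQ

lemma gen_id {a b : ℝ} (h : |a| ≤ b) : ‖a • ContinuousLinearMap.id ℝ G‖ ≤ b := by
  rw [norm_smul]
  refine (mul_le_mul h (ContinuousLinearMap.norm_id_le) (norm_nonneg _)
      ((abs_nonneg _).trans h)).trans (by simp)

lemma gen_id_diff (a b : ℝ) :
    ‖a • ContinuousLinearMap.id ℝ G - b • ContinuousLinearMap.id ℝ G‖ ≤ |a - b| := by
  rw [← sub_smul]; exact gen_id le_rfl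

lemma gen_id_cont {X : Type*} [TopologicalSpace X] {a : X → ℝ} (ha : Continuous a) :
    Continuous fun x => a x • ContinuousLinearMap.id ℝ G := ha.smul continuous_const

/-- Linear problem (second stage). -/
lemma stage2 [CompleteSpace G] {H c c1 B : ℝ} (hH : 0 < H) (hc : 0 ≤ c) (hc1 : 0 ≤ c1) (hB : 0 ≤ B)
    {a : ℝ → E3 → ℝ} {a1 : ℝ → E3 → E3 →L[ℝ] ℝ} {b : ℝ → E3 → G} {b1 : ℝ → E3 → E3 →L[ℝ] G}
    (ca : Continuous fun p : ℝ × E3 => a p.1 p.2) (ca1 : Continuous fun p : ℝ × E3 => a1 p.1 p.2)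
    (cb : Continuous fun p : ℝ × E3 => b p.1 p.2) (cb1 : Continuous fun p : ℝ × E3 => b1 p.1 p.2)
    (da : ∀ s y, HasFDerivAt (a s) (a1 s y) y) (db : ∀ s y, HasFDerivAt (b s) (b1 s y) y)
    (ba : ∀ s y, |a s y| ≤ H ^ 2 / 2)
    (ba1 : ∀ s, 0 ≤ s → ∀ y, ‖a1 s y‖ ≤ B * Real.exp (H / 2 * s))
    (bb : ∀ s, 0 ≤ s → ∀ y, ‖b s y‖ ≤ c * Real.exp (H / 2 * s))
    (bb1 : ∀ s, 0 ≤ s → ∀ y, ‖b1 s y‖ ≤ c1 * Real.exp (2 * (H / 2) * s))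
    {V : ℝ → E3 → G} (cV : Continuous fun p : ℝ × E3 => V p.1 p.2) {C1 : ℝ}
    (bV : ∀ t x, ‖V t x‖ ≤ C1 * Real.exp (H / 2 * max t 0))
    (fV : ∀ t x, V t x = Duh H (fun s y => b s y + (2 * H ^ 2 - a s y) • V s y) (max t 0) x) :
    ∃ S'' : ℝ → E3 → E3 →L[ℝ] G, (Continuous fun p : ℝ × E3 => S'' p.1 p.2) ∧
      (∀ s y, HasFDerivAt (fun y => b s y + (2 * H ^ 2 - a s y) • V s y) (S'' s y) y) ∧
      (∀ t, 0 ≤ t → ∀ x, ‖Duh H S'' t x‖ ≤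
        9 * K0 H * (c1 + B * (9 * K0 H * c)) * Real.exp (H * t)) := by
  have hK := K0_pos hH
  set R2 : ℝ → E3 → G → G := fun s y v => b s y + (2 * H ^ 2 - a s y) • v with hR2
  set Ry2 : ℝ → E3 → G → E3 →L[ℝ] G := fun s y v => b1 s y - (a1 s y).smulRight v with hRy2
  set Rv2 : ℝ → E3 → G → G →L[ℝ] G := fun s y v =>
    (2 * H ^ 2 - a s y) • ContinuousLinearMap.id ℝ G with hRv2
  have pr2 : Continuous fun p : ℝ × E3 × G => (p.1, p.2.1) := by fun_prop
  have cR2 : Continuous fun p : ℝ × E3 × G => R2 p.1 p.2.1 p.2.2 :=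
    (cb.comp pr2).add ((continuous_const.sub (ca.comp pr2)).smul (by fun_prop))
  have cRy2 : Continuous fun p : ℝ × E3 × G => Ry2 p.1 p.2.1 p.2.2 := by
    have q : Continuous fun p : ℝ × E3 × G => (a1 p.1 p.2.1).smulRight p.2.2 := by
      have q1 : Continuous fun p : ℝ × E3 × G => p.2.2 := by fun_prop
      exact ((ContinuousLinearMap.smulRightL ℝ E3 G).continuous.comp (ca1.comp pr2)).clm_apply q1
    exact (cb1.comp pr2).sub q
  have cRv2 : Continuous fun p : ℝ × E3 × G => Rv2 p.1 p.2.1 p.2.2 :=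
    gen_id_cont (continuous_const.sub (ca.comp pr2))
  have dRv2 : ∀ s, 0 ≤ s → ∀ y v, ‖Rv2 s y v‖ ≤ 5 / 2 * H ^ 2 :=
    fun s _ y v => gen_id (nRv (ba s y))
  have dR2 : ∀ s y v, HasFDerivAt (fun z : E3 × G => R2 s z.1 z.2)
      ((Ry2 s y v).coprod (Rv2 s y v)) (y, v) := by
    intro s y v
    have b1 : HasFDerivAt (fun z : E3 × G => z.1)
      (ContinuousLinearMap.fst ℝ E3 G) (y, v) := hasFDerivAt_fst
    have b2 : HasFDerivAt (fun z : E3 × G => z.2)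
      (ContinuousLinearMap.snd ℝ E3 G) (y, v) := hasFDerivAt_snd
    have b3 : HasFDerivAt (fun z : E3 × G => b s z.1) _ (y, v) :=
      HasFDerivAt.comp (y, v) (db s y) b1
    have b5 : HasFDerivAt (fun z : E3 × G => a s z.1) _ (y, v) :=
      HasFDerivAt.comp (y, v) (da s y) b1
    refine (b3.add
      (((hasFDerivAt_const (2 * H ^ 2) (y, v)).sub b5).smul b2)).congr_fderiv ?_
    ext z <;> simp [hRy2, hRv2]
    abel
  have h02 : ∀ s, 0 ≤ s → ∀ y, ‖R2 s y 0‖ ≤ c * Real.exp (H / 2 * s) := by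
    intro s hs y
    have : R2 s y 0 = b s y := by simp [hR2]
    rw [this]
    exact bb s hs y
  have hRy02 : ∀ s, 0 ≤ s → ∀ y, ‖Ry2 s y 0‖ ≤ c1 * Real.exp (2 * (H / 2) * s) := by
    intro s hs y
    have : Ry2 s y 0 = b1 s y := by ext; simp [hRy2]
    rw [this]
    exact bb1 s hs y
  have hRyL2 : ∀ s, 0 ≤ s → ∀ y v v', ‖Ry2 s y v - Ry2 s y v'‖ ≤
      B * Real.exp (H / 2 * s) * ‖v - v'‖ := by
    intro s hs y v v'
    have e : Ry2 s y v - Ry2 s y v' = -((a1 s y).smulRight (v - v')) := by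
      ext z; simp [hRy2, smul_sub]
    rw [e, norm_neg, ContinuousLinearMap.norm_smulRight_apply]
    exact mul_le_mul_of_nonneg_right (ba1 s hs y) (norm_nonneg _)
  have hRvL2 : ∀ s, 0 ≤ s → ∀ y v v', ‖Rv2 s y v - Rv2 s y v'‖ ≤ B * ‖v - v'‖ := by
    intro s hs y v v'
    simp only [hRv2, sub_self, norm_zero]; positivity
  obtain ⟨w2, U, cw2, fw2, bw2, cU, fU, dw2, bU⟩ := regularity hH (by linarith : H / 4 ≤ H / 2) hc
    hc1 hB cR2 cRy2 cRv2 dR2 dRv2 h02 hRy02 hRyL2 hRvL2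
  have hV2 : V = w2 := by
    refine fix_unique hH (by linarith : H / 4 ≤ H / 2) cR2 (lip_of_Rv dR2 dRv2) cV cw2 fV fw2
      (d := C1 + 9 * K0 H * c) ?_
    · intro t x
      refine (norm_sub_le _ _).trans ?_
      have q1 := bV t x
      have q2 := bw2 0 t x
      simp only [pic, zero_sub, norm_neg, pow_zero, mul_one] at q2
      rw [add_mul]
      exact add_le_add q1 q2
  subst hV2
  refine ⟨fun s y => Ry2 s y (V s y) + (Rv2 s y (V s y)).comp (U s y), ?_, ?_, ?_⟩
  · have q : Continuous fun p : ℝ × E3 => (p.1, p.2, V p.1 p.2) := by fun_prop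
    exact (cRy2.comp q).add ((cRv2.comp q).clm_comp cU)
  · intro s y
    have h2 : HasFDerivAt (fun y : E3 => (y, V s y))
        ((ContinuousLinearMap.id ℝ E3).prod (U s y)) y := (hasFDerivAt_id y).prodMk (dw2 s y)
    refine (HasFDerivAt.comp y (dR2 s y (V s y)) h2).congr_fderiv ?_
    ext z; simp
  · intro t ht x
    have q1 := bU t x
    rw [fU t x, max_eq_left ht, show 2 * (H / 2) * t = H * t by ring] at q1
    exact q1

end gen


section gen
variable {G : Type*} [NormedAddCommGroup G] [NormedSpace ℝ G]

lemma gen_b_deriv {a : E3 → ℝ} {a1 : E3 →L[ℝ] ℝ} {A Q : E3 → G} {A1 Q1 : E3 →L[ℝ] G} {y : E3}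
    (ha : HasFDerivAt a a1 y) (hA : HasFDerivAt A A1 y) (hQ : HasFDerivAt Q Q1 y) :
    HasFDerivAt (fun y => -(a y • A y) + Q y) (-(a1.smulRight (A y) + a y • A1) + Q1) y := by
  refine ((ha.smul hA).neg.add hQ).congr_fderiv ?_
  ext z; simp; abel

lemma gen_b1_cont {X : Type*} [TopologicalSpace X] {a : X → ℝ} {a1 : X → E3 →L[ℝ] ℝ} {A : X → G}
    {A1 Q1 : X → E3 →L[ℝ] G} (ha : Continuous a) (ha1 : Continuous a1)
    (hA : Continuous A) (hA1 : Continuous A1) (hQ : Continuous Q1) :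
    Continuous fun x => -((a1 x).smulRight (A x) + a x • A1 x) + Q1 x := by
  have q := ((ContinuousLinearMap.smulRightL ℝ E3 G).continuous.comp ha1).clm_apply hA
  have q' : Continuous fun x => (a1 x).smulRight (A x) := q
  exact (q'.add (ha.smul hA1)).neg.add hQ

lemma gen_b1_bound {a b D e : ℝ} {a1 : E3 →L[ℝ] ℝ} {A : G} {A1 Q1 : E3 →L[ℝ] G}
    (hb : 0 ≤ b) (he : ‖a1‖ ≤ e) (ha : |a| ≤ b) (hA : ‖A‖ ≤ D) (hA1 : ‖A1‖ ≤ D) (hQ : ‖Q1‖ ≤ D) :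
    ‖-(a1.smulRight A + a • A1) + Q1‖ ≤ e * D + b * D + D := by
  refine (norm_add_le _ _).trans (add_le_add ?_ hQ)
  rw [norm_neg]
  refine (norm_add_le _ _).trans ?_
  rw [norm_smul, ContinuousLinearMap.norm_smulRight_apply]
  exact add_le_add (mul_le_mul he hA (norm_nonneg _) ((norm_nonneg _).trans he))
    (mul_le_mul ha hA1 (norm_nonneg _) hb)

lemma gen_a1 {a b D V E : ℝ} {A Q : G} (hE : 1 ≤ E) (hD : 0 ≤ D) (hb : 0 ≤ b) (ha : |a| ≤ b)
    (hA : ‖A‖ ≤ D) (hQ : ‖Q‖ ≤ V * E) : ‖a • (A + Q)‖ ≤ b * (D + V) * E := by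
  rw [norm_smul]
  have q3 : ‖A + Q‖ ≤ (D + V) * E := by
    refine (norm_add_le _ _).trans ?_
    nlinarith
  exact (mul_le_mul ha q3 (norm_nonneg _) hb).trans (le_of_eq (by ring))

end gen

/-- First stage: the semilinear fixed point and its spatial derivative. -/
lemma stage1 {H D B : ℝ} (hH : 0 < H) (hD : 0 ≤ D) (hB : 0 ≤ B)
    {Ψ P : ℝ → E3 → ℝ} {Ψ1 P1 : ℝ → E3 → E3 →L[ℝ] ℝ}
    (cΨ : Continuous fun p : ℝ × E3 => Ψ p.1 p.2) (cΨ1 : Continuous fun p : ℝ × E3 => Ψ1 p.1 p.2)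
    (cP : Continuous fun p : ℝ × E3 => P p.1 p.2) (cP1 : Continuous fun p : ℝ × E3 => P1 p.1 p.2)
    (dΨ : ∀ s y, HasFDerivAt (Ψ s) (Ψ1 s y) y) 
    (dP : ∀ s y, HasFDerivAt (P s) (P1 s y) y) 
    (bΨ : ∀ s y, |Ψ s y| ≤ D) (bΨ1 : ∀ s y, ‖Ψ1 s y‖ ≤ D) 
    (bP : ∀ s y, |P s y| ≤ D) (bP1 : ∀ s y, ‖P1 s y‖ ≤ D) 
    {f f1 f2 : ℝ → ℝ} (hf0 : f 0 = 0) (hf1 : ∀ s, HasDerivAt f (f1 s) s)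
    (hf2 : ∀ s, HasDerivAt f1 (f2 s) s) 
    (bf1 : ∀ s, |f1 s| ≤ H ^ 2 / 2) (bf2 : ∀ s, |f2 s| ≤ B) :
    (∀ s, 0 ≤ s → ∀ y v v', ‖RR H f Ψ P s y v - RR H f Ψ P s y v'‖ ≤ 5 / 2 * H ^ 2 * ‖v - v'‖) ∧
    (Continuous fun p : ℝ × E3 × ℝ => RR H f Ψ P p.1 p.2.1 p.2.2) ∧
    ∃ (w : ℝ → E3 → ℝ) (V : ℝ → E3 → E3 →L[ℝ] ℝ),
      (Continuous fun p : ℝ × E3 => w p.1 p.2) ∧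
      (∀ t x, w t x = Duh H (fun s y => RR H f Ψ P s y (w s y)) (max t 0) x) ∧
      (∀ n t x, ‖pic H (RR H f Ψ P) n t x - w t x‖ ≤
        9 * K0 H * (H ^ 2 / 2 * D + D) * (8 / 9) ^ n * Real.exp (H / 4 * max t 0)) ∧
      (Continuous fun p : ℝ × E3 => V p.1 p.2) ∧
      (∀ t x, HasFDerivAt (w t) (V t x) x) ∧
      (∀ t x, V t x = Duh H (fun s y => (-(f1 (Ψ s y + w s y) • Ψ1 s y) + P1 s y) +
        (2 * H ^ 2 - f1 (Ψ s y + w s y)) • V s y) (max t 0) x) ∧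
      (∀ s y, HasFDerivAt (fun y => RR H f Ψ P s y (w s y))
        ((-(f1 (Ψ s y + w s y) • Ψ1 s y) + P1 s y) +
        (2 * H ^ 2 - f1 (Ψ s y + w s y)) • V s y) y) ∧
      (∀ t x, ‖V t x‖ ≤ (9 * K0 H * ((H ^ 2 / 2 * D + D) + B * (D + 1) *
        (9 * K0 H * (H ^ 2 / 2 * D + D)))) * Real.exp (H / 2 * max t 0)) := by
  have hK := K0_pos hH
  have cf1 : Continuous f1 := continuous_iff_continuousAt.2 fun s => (hf2 s).continuousAt
  have cf : Continuous f := continuous_iff_continuousAt.2 fun s => (hf1 s).continuousAt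
  set c := H ^ 2 / 2 * D + D with hc
  have hc0 : 0 ≤ c := by positivity
  set R := RR H f Ψ P with hR
  set Ry : ℝ → E3 → ℝ → E3 →L[ℝ] ℝ := fun s y v => -(f1 (Ψ s y + v) • Ψ1 s y) + P1 s y with hRy
  set Rv : ℝ → E3 → ℝ → ℝ →L[ℝ] ℝ := fun s y v =>
    (2 * H ^ 2 - f1 (Ψ s y + v)) • ContinuousLinearMap.id ℝ ℝ with hRv
  have pr : Continuous fun p : ℝ × E3 × ℝ => (p.1, p.2.1) := by fun_prop
  have pv : Continuous fun p : ℝ × E3 × ℝ => p.2.2 := by fun_prop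
  have cR : Continuous fun p : ℝ × E3 × ℝ => R p.1 p.2.1 p.2.2 :=
    ((continuous_const.mul pv).sub
      (cf.comp ((cΨ.comp pr).add pv))).add (cP.comp pr)
  have cF1 : Continuous fun p : ℝ × E3 × ℝ => f1 (Ψ p.1 p.2.1 + p.2.2) :=
    cf1.comp ((cΨ.comp pr).add pv)
  have cRy : Continuous fun p : ℝ × E3 × ℝ => Ry p.1 p.2.1 p.2.2 :=
    gen_cont cF1 (cΨ1.comp pr) (cP1.comp pr)
  have cRv : Continuous fun p : ℝ × E3 × ℝ => Rv p.1 p.2.1 p.2.2 :=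
    gen_id_cont (continuous_const.sub cF1)
  have bfΨ : ∀ s y, |f (Ψ s y)| ≤ H ^ 2 / 2 * D := by
    intro s y
    have := lip_of_deriv hf1 bf1 (Ψ s y) 0
    rw [hf0, sub_zero, sub_zero] at this
    exact this.trans (mul_le_mul_of_nonneg_left (bΨ s y) (by positivity))
  have dRv : ∀ s, 0 ≤ s → ∀ y v, ‖Rv s y v‖ ≤ 5 / 2 * H ^ 2 :=
    fun s _ y v => gen_id (nRv (bf1 _))
  have dR : ∀ s y v, HasFDerivAt (fun z : E3 × ℝ => R s z.1 z.2)
      ((Ry s y v).coprod (Rv s y v)) (y, v) := by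
    intro s y v
    have a1 : HasFDerivAt (fun z : E3 × ℝ => z.1) (ContinuousLinearMap.fst ℝ E3 ℝ) (y, v) :=
      hasFDerivAt_fst
    have a2 : HasFDerivAt (fun z : E3 × ℝ => z.2) (ContinuousLinearMap.snd ℝ E3 ℝ) (y, v) :=
      hasFDerivAt_snd
    have a3 : HasFDerivAt (fun z : E3 × ℝ => Ψ s z.1) _ (y, v) := HasFDerivAt.comp (y, v) (dΨ s y) a1
    have a4 : HasFDerivAt (fun z : E3 × ℝ => P s z.1) _ (y, v) := HasFDerivAt.comp (y, v) (dP s y) a1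
    have a5 := HasDerivAt.comp_hasFDerivAt (y, v) (hf1 (Ψ s y + v)) (a3.add a2)
    refine (((a2.const_mul (2 * H ^ 2)).sub a5).add a4).congr_fderiv ?_
    ext z <;> simp [hRy, hRv]
  have h0 : ∀ s, 0 ≤ s → ∀ y, ‖R s y 0‖ ≤ c * Real.exp (H / 4 * s) := by
    intro s hs y
    have : ‖R s y 0‖ ≤ c := by
      simp only [hR, RR, Real.norm_eq_abs]
      have := bfΨ s y
      have := bP s y
      rw [abs_le] at *
      simp only [mul_zero, add_zero, zero_sub]
      constructor <;> linarith
    exact this.trans (le_mul_of_one_le_right hc0 (one_le_exp' (by positivity) hs))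
  have hRy0 : ∀ s, 0 ≤ s → ∀ y, ‖Ry s y 0‖ ≤ c * Real.exp (2 * (H / 4) * s) := by
    intro s hs y
    exact (gen_bound (by positivity) (bf1 _) (bΨ1 s y) (bP1 s y)).trans
      (le_mul_of_one_le_right hc0 (one_le_exp' (by positivity) hs))
  have hRyL : ∀ s, 0 ≤ s → ∀ y v v', ‖Ry s y v - Ry s y v'‖ ≤
      B * (D + 1) * Real.exp (H / 4 * s) * ‖v - v'‖ := by
    intro s hs y v v'
    refine (gen_diff _ _ _ _).le.trans ?_
    have a1 := lip_of_deriv hf2 bf2 (Ψ s y + v) (Ψ s y + v')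
    rw [add_sub_add_left_eq_sub] at a1
    have hn : 0 ≤ ‖Ψ1 s y‖ := norm_nonneg _
    have a2 := mul_le_mul a1 (bΨ1 s y) hn (by positivity)
    have a3 := one_le_exp' (μ := H / 4) (by positivity) hs
    refine a2.trans ?_
    rw [Real.norm_eq_abs]
    have : 0 ≤ B * |v - v'| := by positivity
    have h2 : D ≤ (D + 1) * Real.exp (H / 4 * s) := by nlinarith
    calc _ ≤ B * |v - v'| * ((D + 1) * Real.exp (H / 4 * s)) := mul_le_mul_of_nonneg_left h2 this
      _ = _ := by ring
  have hRvL : ∀ s, 0 ≤ s → ∀ y v v', ‖Rv s y v - Rv s y v'‖ ≤ B * (D + 1) * ‖v - v'‖ := by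
    intro s hs y v v'
    refine (gen_id_diff _ _).trans ?_
    have a1 := lip_of_deriv hf2 bf2 (Ψ s y + v) (Ψ s y + v')
    rw [add_sub_add_left_eq_sub] at a1
    have e : 2 * H ^ 2 - f1 (Ψ s y + v) - (2 * H ^ 2 - f1 (Ψ s y + v')) =
      -(f1 (Ψ s y + v) - f1 (Ψ s y + v')) := by ring
    rw [e, abs_neg, Real.norm_eq_abs]
    have : 0 ≤ B * |v - v'| * D := by positivity
    linarith
  obtain ⟨w, V, cw, fw, bw, cV, fV, dw, bV⟩ := regularity hH le_rfl hc0 hc0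
    (by positivity : 0 ≤ B * (D + 1)) cR cRy cRv dR dRv h0 hRy0 hRyL hRvL
  refine ⟨lip_of_Rv dR dRv, cR, w, V, cw, fw, bw, cV, dw, ?_, ?_, ?_⟩
  · intro t x
    rw [fV t x]
    congr 1
  · intro s y
    have h2 : HasFDerivAt (fun y : E3 => (y, w s y))
        ((ContinuousLinearMap.id ℝ E3).prod (V s y)) y := (hasFDerivAt_id y).prodMk (dw s y)
    refine (HasFDerivAt.comp y (dR s y (w s y)) h2).congr_fderiv ?_
    ext z; simp [hRy, hRv]
  · intro t x
    have := bV t x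
    rwa [show 2 * (H / 4) * max t 0 = H / 2 * max t 0 by ring] at this

lemma stage {H D B : ℝ} (hH : 0 < H) (hD : 0 ≤ D) (hB : 0 ≤ B)
    {Ψ P : ℝ → E3 → ℝ} {Ψ1 P1 : ℝ → E3 → E3 →L[ℝ] ℝ} {Ψ2 P2 : ℝ → E3 → E3 →L[ℝ] E3 →L[ℝ] ℝ}
    (cΨ : Continuous fun p : ℝ × E3 => Ψ p.1 p.2) (cΨ1 : Continuous fun p : ℝ × E3 => Ψ1 p.1 p.2)
    (cΨ2 : Continuous fun p : ℝ × E3 => Ψ2 p.1 p.2)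
    (cP : Continuous fun p : ℝ × E3 => P p.1 p.2) (cP1 : Continuous fun p : ℝ × E3 => P1 p.1 p.2)
    (cP2 : Continuous fun p : ℝ × E3 => P2 p.1 p.2)
    (dΨ : ∀ s y, HasFDerivAt (Ψ s) (Ψ1 s y) y) (dΨ1 : ∀ s y, HasFDerivAt (Ψ1 s) (Ψ2 s y) y)
    (dP : ∀ s y, HasFDerivAt (P s) (P1 s y) y) (dP1 : ∀ s y, HasFDerivAt (P1 s) (P2 s y) y)
    (bΨ : ∀ s y, |Ψ s y| ≤ D) (bΨ1 : ∀ s y, ‖Ψ1 s y‖ ≤ D) (bΨ2 : ∀ s y, ‖Ψ2 s y‖ ≤ D)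
    (bP : ∀ s y, |P s y| ≤ D) (bP1 : ∀ s y, ‖P1 s y‖ ≤ D) (bP2 : ∀ s y, ‖P2 s y‖ ≤ D)
    {f f1 f2 : ℝ → ℝ} (hf0 : f 0 = 0) (hf1 : ∀ s, HasDerivAt f (f1 s) s)
    (hf2 : ∀ s, HasDerivAt f1 (f2 s) s) (cf2 : Continuous f2)
    (bf1 : ∀ s, |f1 s| ≤ H ^ 2 / 2) (bf2 : ∀ s, |f2 s| ≤ B) :
    ∃ (w : ℝ → E3 → ℝ) (S' : ℝ → E3 → E3 →L[ℝ] ℝ) (S'' : ℝ → E3 → E3 →L[ℝ] E3 →L[ℝ] ℝ),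
      (Continuous fun p : ℝ × E3 => w p.1 p.2) ∧
      (∀ t x, w t x = Duh H (fun s y => RR H f Ψ P s y (w s y)) (max t 0) x) ∧
      (∀ n t x, ‖pic H (RR H f Ψ P) n t x - w t x‖ ≤
        9 * K0 H * (H ^ 2 / 2 * D + D) * (8 / 9) ^ n * Real.exp (H / 4 * max t 0)) ∧
      (∀ s, 0 ≤ s → ∀ y v v', ‖RR H f Ψ P s y v - RR H f Ψ P s y v'‖ ≤ 5 / 2 * H ^ 2 * ‖v - v'‖) ∧
      (Continuous fun p : ℝ × E3 × ℝ => RR H f Ψ P p.1 p.2.1 p.2.2) ∧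
      (Continuous fun p : ℝ × E3 => S' p.1 p.2) ∧ (Continuous fun p : ℝ × E3 => S'' p.1 p.2) ∧
      (∀ s y, HasFDerivAt (fun y => RR H f Ψ P s y (w s y)) (S' s y) y) ∧
      (∀ s y, HasFDerivAt (S' s) (S'' s y) y) ∧
      (∀ t, 0 ≤ t → ∀ x, ‖Duh H S'' t x‖ ≤ Cst H D B * Real.exp (H * t)) := by
  have hK := K0_pos hH
  have cf1 : Continuous f1 := continuous_iff_continuousAt.2 fun s => (hf2 s).continuousAt
  obtain ⟨hL, cR, w, V, cw, fw, bw, cV, dw, fV, dS, bV⟩ := stage1 hH hD hB cΨ cΨ1 cP cP1 dΨ dP bΨ bΨ1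
    bP bP1 hf0 hf1 hf2 bf1 bf2
  set c := H ^ 2 / 2 * D + D with hc
  have hc0 : 0 ≤ c := by positivity
  set C1 := 9 * K0 H * (c + B * (D + 1) * (9 * K0 H * c)) with hC1
  have hC10 : 0 ≤ C1 := by positivity
  set a : ℝ → E3 → ℝ := fun s y => f1 (Ψ s y + w s y) with ha
  set a1 : ℝ → E3 → E3 →L[ℝ] ℝ := fun s y => f2 (Ψ s y + w s y) • (Ψ1 s y + V s y) with ha1
  have ca : Continuous fun p : ℝ × E3 => a p.1 p.2 := cf1.comp (cΨ.add cw)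
  have ca1 : Continuous fun p : ℝ × E3 => a1 p.1 p.2 := (cf2.comp (cΨ.add cw)).smul (cΨ1.add cV)
  have da : ∀ s y, HasFDerivAt (a s) (a1 s y) y := by
    intro s y
    exact HasDerivAt.comp_hasFDerivAt y (hf2 (Ψ s y + w s y)) ((dΨ s y).add (dw s y))
  have ba : ∀ s y, |a s y| ≤ H ^ 2 / 2 := fun s y => bf1 _
  have ba1 : ∀ s, 0 ≤ s → ∀ y, ‖a1 s y‖ ≤ B * (D + C1) * Real.exp (H / 2 * s) := by
    intro s hs y
    have q1 := bV s y
    rw [max_eq_left hs] at q1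
    exact gen_a1 (one_le_exp' (by positivity) hs) hD hB (bf2 _) (bΨ1 s y) q1
  have bb : ∀ s, 0 ≤ s → ∀ y, ‖-(a s y • Ψ1 s y) + P1 s y‖ ≤ c * Real.exp (H / 2 * s) :=
    fun s hs y => (gen_bound (by positivity) (ba s y) (bΨ1 s y) (bP1 s y)).trans
      (le_mul_of_one_le_right hc0 (one_le_exp' (by positivity) hs))
  have bb1 : ∀ s, 0 ≤ s → ∀ y, ‖-((a1 s y).smulRight (Ψ1 s y) + a s y • Ψ2 s y) + P2 s y‖ ≤
      (B * (D + C1) * D + c) * Real.exp (2 * (H / 2) * s) := by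
    intro s hs y
    refine (gen_b1_bound (by positivity) (ba1 s hs y) (ba s y) (bΨ1 s y) (bΨ2 s y) (bP2 s y)).trans ?_
    have q4 := one_le_exp' (μ := 2 * (H / 2)) (by positivity) hs
    have q5 : Real.exp (H / 2 * s) ≤ Real.exp (2 * (H / 2) * s) := by
      rw [Real.exp_le_exp]; nlinarith
    have r1 := mul_le_mul_of_nonneg_left q5 (by positivity : 0 ≤ B * (D + C1) * D)
    have r2 := le_mul_of_one_le_right hc0 q4
    rw [hc] at r2 ⊢
    linarith
  obtain ⟨S'', cS'', dS'', bS''⟩ := stage2 (b := fun s y => -(a s y • Ψ1 s y) + P1 s y)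
    (b1 := fun s y => -((a1 s y).smulRight (Ψ1 s y) + a s y • Ψ2 s y) + P2 s y)
    hH hc0 (by positivity : 0 ≤ B * (D + C1) * D + c) (by positivity : 0 ≤ B * (D + C1)) ca ca1
    (gen_cont ca cΨ1 cP1) (gen_b1_cont ca ca1 cΨ1 cΨ2 cP2) da
    (fun s y => gen_b_deriv (da s y) (dΨ1 s y) (dP1 s y)) ba ba1 bb bb1 cV bV fV
  exact ⟨w, _, S'', cw, fw, bw, hL, cR,
    (gen_cont ca cΨ1 cP1).add ((continuous_const.sub ca).smul cV), cS'', dS, dS'', bS''⟩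


/-! ### Laplacian and data -/

lemma lap_eq {u : E3 → ℝ} {u1 : E3 → E3 →L[ℝ] ℝ} {u2 : E3 → E3 →L[ℝ] E3 →L[ℝ] ℝ}
    (h1 : ∀ x, HasFDerivAt u (u1 x) x) (h2 : ∀ x, HasFDerivAt u1 (u2 x) x) (x : E3) :
    lap u x = ∑ i, u2 x (bv i) (bv i) := by
  unfold lap
  refine Finset.sum_congr rfl fun i _ => ?_
  have e1 : (fun y => fderiv ℝ u y (EuclideanSpace.single i 1)) = fun y => u1 y (bv i) := by
    funext y; rw [(h1 y).fderiv]
  rw [e1]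
  have := ((h2 x).clm_apply (hasFDerivAt_const (bv i) x)).fderiv
  rw [this]; simp

lemma smooth_fderiv {u : E3 → ℝ} (hu : ContDiff ℝ (⊤ : ℕ∞) u) :
    ContDiff ℝ (⊤ : ℕ∞) (fderiv ℝ u) := hu.fderiv_right (by simp)

lemma smooth_fderiv2 {u : E3 → ℝ} (hu : ContDiff ℝ (⊤ : ℕ∞) u) :
    ContDiff ℝ (⊤ : ℕ∞) (fderiv ℝ (fderiv ℝ u)) := (smooth_fderiv hu).fderiv_right (by simp)

lemma smooth_d1 {u : E3 → ℝ} (hu : ContDiff ℝ (⊤ : ℕ∞) u) (x : E3) :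
    HasFDerivAt u (fderiv ℝ u x) x := (hu.differentiable (by simp) x).hasFDerivAt

lemma smooth_d2 {u : E3 → ℝ} (hu : ContDiff ℝ (⊤ : ℕ∞) u) (x : E3) :
    HasFDerivAt (fderiv ℝ u) (fderiv ℝ (fderiv ℝ u) x) x :=
  ((smooth_fderiv hu).differentiable (by simp) x).hasFDerivAt

lemma lap_smooth {u : E3 → ℝ} (hu : ContDiff ℝ (⊤ : ℕ∞) u) : ContDiff ℝ (⊤ : ℕ∞) (lap u) := by
  have : lap u = fun x => ∑ i, fderiv ℝ (fderiv ℝ u) x (bv i) (bv i) :=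
    funext fun x => lap_eq (smooth_d1 hu) (smooth_d2 hu) x
  rw [this]
  have := smooth_fderiv2 hu
  exact ContDiff.sum fun i _ => (this.clm_apply contDiff_const).clm_apply contDiff_const

lemma lap_supp {u : E3 → ℝ} (hs : HasCompactSupport u) : HasCompactSupport (lap u) := by
  have h : ∀ i : Fin 3, HasCompactSupport fun x =>
    fderiv ℝ (fun y => fderiv ℝ u y (EuclideanSpace.single i 1)) x (EuclideanSpace.single i 1) :=
    fun i => (hs.fderiv_apply ℝ _).fderiv_apply ℝ _
  have e : lap u = fun x => (fderiv ℝ (fun y => fderiv ℝ u y (EuclideanSpace.single 0 1)) x (EuclideanSpace.single 0 1)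
    + fderiv ℝ (fun y => fderiv ℝ u y (EuclideanSpace.single 1 1)) x (EuclideanSpace.single 1 1))
    + fderiv ℝ (fun y => fderiv ℝ u y (EuclideanSpace.single 2 1)) x (EuclideanSpace.single 2 1) := by
    funext x; simp only [lap, Fin.sum_univ_three]
  rw [e]
  exact ((h 0).add (h 1)).add (h 2)

lemma lap_inv {u : E3 → ℝ} (hu : ContDiff ℝ (⊤ : ℕ∞) u) (e : E3 ≃ₗᵢ[ℝ] E3)
    (hr : ∀ x, u (e x) = u x) (x : E3) : lap u (e x) = lap u x := by
  have hl : ∀ (b : OrthonormalBasis (Fin 3) ℝ E3) x,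
      Laplacian.laplacian u x = ∑ i, iteratedFDeriv ℝ 2 u x ![b i, b i] := fun b x => by
    rw [InnerProductSpace.laplacian_eq_iteratedFDeriv_orthonormalBasis u b]
  have h0 : ∀ x, lap u x = Laplacian.laplacian u x := by
    intro x
    rw [lap_eq (smooth_d1 hu) (smooth_d2 hu), hl (EuclideanSpace.basisFun (Fin 3) ℝ)]
    refine Finset.sum_congr rfl fun i _ => ?_
    rw [iteratedFDeriv_two_apply]
    simp
  rw [h0, h0, hl (EuclideanSpace.basisFun (Fin 3) ℝ) x, 
    hl ((EuclideanSpace.basisFun (Fin 3) ℝ).map e) (e x)]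
  refine Finset.sum_congr rfl fun i _ => ?_
  have hc : u ∘ (e.toContinuousLinearEquiv : E3 →L[ℝ] E3) = u := funext hr
  have := (e.toContinuousLinearEquiv : E3 →L[ℝ] E3).iteratedFDeriv_comp_right (f := u) hu x (i := 2)
    (WithTop.coe_le_coe.2 (le_top : ((2:ℕ):ℕ∞) ≤ ⊤))
  rw [hc] at this
  rw [this, ContinuousMultilinearMap.compContinuousLinearMap_apply]
  congr 1
  ext j
  fin_cases j <;> simp

lemma gen_fderiv_bound {G : Type*} [NormedAddCommGroup G] [NormedSpace ℝ G] {u : E3 → G}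
    (hu : ContDiff ℝ (⊤ : ℕ∞) u) (hs : HasCompactSupport u) : ∃ D : ℝ, ∀ y, ‖fderiv ℝ u y‖ ≤ D :=
  (hs.fderiv ℝ).exists_bound_of_continuous (hu.continuous_fderiv (by simp))

lemma smooth_bound {u : E3 → ℝ} (hu : ContDiff ℝ (⊤ : ℕ∞) u) (hs : HasCompactSupport u) :
    ∃ D : ℝ, 0 ≤ D ∧ (∀ y, |u y| ≤ D) ∧ (∀ y, ‖fderiv ℝ u y‖ ≤ D) ∧
      ∀ y, ‖fderiv ℝ (fderiv ℝ u) y‖ ≤ D := by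
  obtain ⟨D0, h0⟩ := hs.exists_bound_of_continuous hu.continuous
  obtain ⟨D1, h1⟩ := gen_fderiv_bound hu hs
  obtain ⟨D2, h2⟩ := gen_fderiv_bound (smooth_fderiv hu) (hs.fderiv ℝ)
  have p0 : 0 ≤ D0 := (norm_nonneg (u 0)).trans (h0 0)
  have p1 : 0 ≤ D1 := (norm_nonneg (fderiv ℝ u 0)).trans (h1 0)
  have p2 : 0 ≤ D2 := (norm_nonneg (fderiv ℝ (fderiv ℝ u) 0)).trans (h2 0)
  exact ⟨D0 + D1 + D2, by positivity, fun y => (h0 y).trans (by linarith),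
    fun y => (h1 y).trans (by linarith), fun y => (h2 y).trans (by linarith)⟩

section comb
variable {G : Type*} [NormedAddCommGroup G] [NormedSpace ℝ G]

lemma comb_cont {α β : ℝ → ℝ} {u v : E3 → G} (hα : Continuous α) (hβ : Continuous β)
    (hu : Continuous u) (hv : Continuous v) :
    Continuous fun p : ℝ × E3 => α p.1 • u p.2 + β p.1 • v p.2 := by fun_prop

lemma comb_deriv (a b : ℝ) {u v : E3 → G} {u1 v1 : E3 →L[ℝ] G} {y : E3}
    (hu : HasFDerivAt u u1 y) (hv : HasFDerivAt v v1 y) :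
    HasFDerivAt (fun y => a • u y + b • v y) (a • u1 + b • v1) y :=
  (hu.const_smul a).add (hv.const_smul b)

lemma comb_bound {a b c D : ℝ} {A Q : G} (hc : 0 ≤ c) (ha : |a| ≤ c) (hb : |b| ≤ c)
    (hA : ‖A‖ ≤ D) (hQ : ‖Q‖ ≤ D) : ‖a • A + b • Q‖ ≤ 2 * c * D := by
  refine (norm_add_le _ _).trans ?_
  rw [norm_smul, norm_smul]
  have := mul_le_mul ha hA (norm_nonneg _) hc
  have := mul_le_mul hb hQ (norm_nonneg _) hc
  simp only [Real.norm_eq_abs] at *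
  linarith

end comb

/-- the time profile -/
def bet (H t : ℝ) : ℝ := (1 - Real.exp (-3 * H * t)) / (3 * H)

lemma bet_zero (H : ℝ) : bet H 0 = 0 := by simp [bet]

lemma bet_deriv {H : ℝ} (hH : 0 < H) (t : ℝ) :
    HasDerivAt (bet H) (Real.exp (-3 * H * t)) t := by
  unfold bet
  refine (((exp_deriv0 (-3 * H) t).const_sub 1).div_const (3 * H)).congr_deriv ?_
  field_simp

lemma bet_smooth (H : ℝ) : ContDiff ℝ 2 (bet H) := by
  unfold bet
  fun_prop

lemma bet_bound {H : ℝ} (hH : 0 < H) {t : ℝ} (ht : 0 ≤ t) : |bet H t| ≤ 1 / (3 * H) := by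
  have h1 := Real.exp_pos (-3 * H * t)
  have h2 : Real.exp (-3 * H * t) ≤ 1 := by
    rw [Real.exp_le_one_iff]; nlinarith [mul_nonneg hH.le ht]
  unfold bet
  rw [abs_of_nonneg (div_nonneg (by linarith) (by positivity))]
  gcongr
  linarith

lemma refl_exists {x y : E3} (h : ‖x‖ = ‖y‖) : ∃ e : E3 ≃ₗᵢ[ℝ] E3, e x = y :=
  ⟨_, Submodule.reflection_sub h⟩


section prop
variable {F : Type*} [NormedAddCommGroup F] [NormedSpace ℝ F]

lemma Duh_inv (H : ℝ) {S : ℝ → E3 → F} (e : E3 ≃ₗᵢ[ℝ] E3) (hS : ∀ s y, S s (e y) = S s y)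
    (t : ℝ) (x : E3) : Duh H S t (e x) = Duh H S t x := by
  unfold Duh Iop
  congr 1
  funext s
  congr 1
  rw [← sph_integral_inv e (fun ω => S s (e x + kk H t s • ω))]
  congr 1
  funext ω
  rw [← map_smul, ← map_add, hS]

lemma Duh_zero (H : ℝ) (S : ℝ → E3 → F) (x : E3) : Duh H S 0 x = 0 := by
  simp [Duh, Iop]

lemma Duh_vanish (H : ℝ) {S : ℝ → E3 → F} {t : ℝ} {x : E3}
    (h : ∀ s ∈ uIcc 0 t, ∀ ω : E3, ‖ω‖ = 1 → S s (x + kk H t s • ω) = 0) : Duh H S t x = 0 := by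
  unfold Duh Iop
  rw [intervalIntegral.integral_congr (g := fun _ => (0:F)), intervalIntegral.integral_zero]
  intro s hs
  simp only
  rw [integral_eq_zero_of_ae, smul_zero]
  filter_upwards [sph_ae] with ω hω
  exact h s hs ω (by simpa using hω)

lemma kk_add (H t s : ℝ) : kk H t 0 = kk H s 0 + kk H t s := by
  unfold kk; ring

lemma kk_mono {H : ℝ} (hH : 0 < H) {t s : ℝ} (h : s ≤ t) : 0 ≤ kk H t s := by
  unfold kk
  apply div_nonneg _ hH.le
  rw [sub_nonneg, Real.exp_le_exp]; nlinarith

lemma kk_neg (H t s : ℝ) : kk H t s = - kk H s t := by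
  unfold kk; ring

lemma kk_radius {H : ℝ} (hH : 0 < H) {t s : ℝ} (hs : s ∈ uIcc 0 t) :
    kk H (max s 0) 0 + |kk H t s| ≤ |kk H t 0| := by
  rcases le_total 0 t with ht | ht
  · rw [uIcc_of_le ht] at hs
    rw [max_eq_left hs.1, abs_of_nonneg (kk_mono hH hs.2), abs_of_nonneg (kk_mono hH ht), kk_add H t s]
  · rw [uIcc_of_ge ht] at hs
    have h1 := kk_mono hH hs.1
    have h2 := kk_mono hH hs.2
    rw [max_eq_right hs.2, kk_self, kk_neg H t s, kk_neg H t 0, abs_neg, abs_neg, abs_of_nonneg h1,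
      abs_of_nonneg (kk_mono hH ht)]
    have := kk_add H t s
    have e1 := kk_neg H t 0
    have e2 := kk_neg H t s
    have e3 := kk_neg H s 0
    linarith

lemma Duh_supp {H : ℝ} (hH : 0 < H) {ρ : ℝ} {S : ℝ → E3 → F}
    (hS : ∀ s y, ρ + kk H (max s 0) 0 < ‖y‖ → S s y = 0) {t : ℝ} {x : E3}
    (hx : ρ + |kk H t 0| < ‖x‖) : Duh H S t x = 0 := by
  apply Duh_vanish
  intro s hs ω hω
  apply hS
  have h1 := kk_radius hH hs
  have h2 : ‖x‖ ≤ ‖x + kk H t s • ω‖ + ‖kk H t s • ω‖ := norm_le_add_norm_add x _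
  rw [norm_smul, hω, mul_one, Real.norm_eq_abs] at h2
  linarith

lemma pic_supp {H : ℝ} (hH : 0 < H) {ρ : ℝ} {R : ℝ → E3 → F → F}
    (hR : ∀ s y, ρ < ‖y‖ → R s y 0 = 0) (n : ℕ) :
    ∀ t x, ρ + kk H (max t 0) 0 < ‖x‖ → pic H R n t x = 0 := by
  induction n with
  | zero => intro t x _; rfl
  | succ n ih =>
    intro t x hx
    simp only [pic]
    refine Duh_supp (ρ := ρ) hH ?_ ?_
    · intro s y hy
      rw [ih s y hy]
      exact hR s y (by have := kk_mono hH (le_max_right s 0); linarith)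
    · rwa [abs_of_nonneg (kk_mono hH (le_max_right t 0))]

end prop

lemma tendsto_geom_zero (A b : ℝ) : Tendsto (fun n : ℕ => A * (8 / 9 : ℝ) ^ n * b) atTop (𝓝 0) := by
  have := ((tendsto_pow_atTop_nhds_zero_of_lt_one (by norm_num : (0:ℝ) ≤ 8 / 9)
    (by norm_num)).const_mul A).mul_const b
  simpa using this


lemma w_supp {H : ℝ} (hH : 0 < H) {ρ A b : ℝ} {R : ℝ → E3 → ℝ → ℝ} {w : ℝ → E3 → ℝ}
    (hR : ∀ s y, ρ < ‖y‖ → R s y 0 = 0)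
    (hw : ∀ n t x, ‖pic H R n t x - w t x‖ ≤ A * (8 / 9) ^ n * Real.exp (b * max t 0)) (t : ℝ) (x : E3)
    (hx : ρ + kk H (max t 0) 0 < ‖x‖) : w t x = 0 := by
  have h1 : ∀ n, ‖w t x‖ ≤ A * (8 / 9) ^ n * Real.exp (b * max t 0) := by
    intro n
    have := hw n t x
    rwa [pic_supp hH hR n t x hx, zero_sub, norm_neg] at this
  have h2 := ge_of_tendsto' (tendsto_geom_zero A (Real.exp (b * max t 0))) h1
  exact norm_le_zero_iff.1 h2

lemma w_radial {H : ℝ} (hH : 0 < H) {A b : ℝ} {R : ℝ → E3 → ℝ → ℝ} {w : ℝ → E3 → ℝ} (e : E3 ≃ₗᵢ[ℝ] E3)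
    (hR : ∀ s y v, R s (e y) v = R s y v)
    (hw : ∀ n t x, ‖pic H R n t x - w t x‖ ≤ A * (8 / 9) ^ n * Real.exp (b * max t 0)) (t : ℝ) (x : E3) :
    w t (e x) = w t x := by
  have hp : ∀ n t x, pic H R n t (e x) = pic H R n t x := by
    intro n
    induction n with
    | zero => intro t x; rfl
    | succ n ih =>
      intro t x
      simp only [pic]
      exact Duh_inv H e (fun s y => by rw [ih, hR]) _ _
  have l1 : ∀ x, Tendsto (fun n => pic H R n t x) atTop (𝓝 (w t x)) := by
    intro x
    rw [tendsto_iff_norm_sub_tendsto_zero]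
    exact squeeze_zero (fun _ => norm_nonneg _) (fun n => hw n t x) (tendsto_geom_zero _ _)
  have := l1 (e x)
  simp only [hp] at this
  exact tendsto_nhds_unique this (l1 x)

structure Dat (H D ρ : ℝ) (g h : E3 → ℝ) (Ψ P : ℝ → E3 → ℝ) (Ψ1 P1 : ℝ → E3 → E3 →L[ℝ] ℝ)
    (Ψ2 P2 : ℝ → E3 → E3 →L[ℝ] E3 →L[ℝ] ℝ) : Prop where
  cΨ : Continuous fun p : ℝ × E3 => Ψ p.1 p.2
  cΨ1 : Continuous fun p : ℝ × E3 => Ψ1 p.1 p.2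
  cΨ2 : Continuous fun p : ℝ × E3 => Ψ2 p.1 p.2
  cP : Continuous fun p : ℝ × E3 => P p.1 p.2
  cP1 : Continuous fun p : ℝ × E3 => P1 p.1 p.2
  cP2 : Continuous fun p : ℝ × E3 => P2 p.1 p.2
  dΨ : ∀ s y, HasFDerivAt (Ψ s) (Ψ1 s y) y
  dΨ1 : ∀ s y, HasFDerivAt (Ψ1 s) (Ψ2 s y) y
  dP : ∀ s y, HasFDerivAt (P s) (P1 s y) y
  dP1 : ∀ s y, HasFDerivAt (P1 s) (P2 s y) y
  bΨ : ∀ s y, |Ψ s y| ≤ D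
  bΨ1 : ∀ s y, ‖Ψ1 s y‖ ≤ D
  bΨ2 : ∀ s y, ‖Ψ2 s y‖ ≤ D
  bP : ∀ s y, |P s y| ≤ D
  bP1 : ∀ s y, ‖P1 s y‖ ≤ D
  bP2 : ∀ s y, ‖P2 s y‖ ≤ D
  sΨ : ∀ s y, ρ < ‖y‖ → Ψ s y = 0
  sP : ∀ s y, ρ < ‖y‖ → P s y = 0
  iΨ : ∀ (e : E3 ≃ₗᵢ[ℝ] E3) s y, Ψ s (e y) = Ψ s y
  iP : ∀ (e : E3 ≃ₗᵢ[ℝ] E3) s y, P s (e y) = P s y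
  eΨ : ∀ s, 0 ≤ s → ∀ y, Ψ s y = g y + bet H s * h y
  eP : ∀ s, 0 ≤ s → ∀ y, P s y = Real.exp (-2 * H * s) * ∑ i, Ψ2 s y (bv i) (bv i)

lemma bv_norm (i : Fin 3) : ‖bv i‖ = 1 := by simp [bv]

lemma bil_bound {A : E3 →L[ℝ] E3 →L[ℝ] ℝ} {c : ℝ} (h : ‖A‖ ≤ c) (i : Fin 3) :
    |A (bv i) (bv i)| ≤ c := by
  have := A.le_opNorm₂ (bv i) (bv i)
  rw [bv_norm, mul_one, mul_one] at this
  exact this.trans h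

lemma thmA2 {H D ρ B : ℝ} (hH : 0 < H) (hD : 0 ≤ D) (hB : 0 ≤ B) {g h : E3 → ℝ} {Ψ P : ℝ → E3 → ℝ}
    {Ψ1 P1 : ℝ → E3 → E3 →L[ℝ] ℝ} {Ψ2 P2 : ℝ → E3 → E3 →L[ℝ] E3 →L[ℝ] ℝ}
    (d : Dat H D ρ g h Ψ P Ψ1 P1 Ψ2 P2)
    (hg : ContDiff ℝ (⊤ : ℕ∞) g) (hh : ContDiff ℝ (⊤ : ℕ∞) h) 
    (hgr : ∀ (e : E3 ≃ₗᵢ[ℝ] E3) y, g (e y) = g y) (hhr : ∀ (e : E3 ≃ₗᵢ[ℝ] E3) y, h (e y) = h y)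
    (hgs : ∀ y, ρ < ‖y‖ → g y = 0) (hhs : ∀ y, ρ < ‖y‖ → h y = 0)
    {f f1 f2 : ℝ → ℝ} (hf0 : f 0 = 0) (hf1 : ∀ s, HasDerivAt f (f1 s) s)
    (hf2 : ∀ s, HasDerivAt f1 (f2 s) s) (cf2 : Continuous f2)
    (bf1 : ∀ s, |f1 s| ≤ H ^ 2 / 2) (bf2 : ∀ s, |f2 s| ≤ B) : ∃ φ φt φtt : ℝ → E3 → ℝ,
        ContDiff ℝ 2 (Function.uncurry φ) ∧
        (∀ t x, HasDerivAt (fun t => φ t x) (φt t x) t) ∧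
        (∀ t x, HasDerivAt (fun t => φt t x) (φtt t x) t) ∧
        (∀ t, 0 ≤ t → ∀ x, φtt t x + 3 * H * φt t x - Real.exp (-2 * H * t) * lap (φ t) x
          + f (φ t x) = 0) ∧
        (∀ t, 0 ≤ t → ∀ x, |lap (φ t) x| ≤ 3 * (D + Cst H D B) * Real.exp (H * t)) ∧
        (∀ x, φ 0 x = g x) ∧ (∀ x, φt 0 x = h x) ∧
        (∀ t : ℝ, ∀ x y : E3, ‖x‖ = ‖y‖ → φ t x = φ t y) ∧
        (∀ t : ℝ, HasCompactSupport (φ t)) := by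
  have hK := K0_pos hH
  obtain ⟨w, S', S'', cw, fw, bw, hL, cR, cS', cS'', dS, dS', bS''⟩ := stage hH hD hB d.cΨ d.cΨ1 d.cΨ2
    d.cP d.cP1 d.cP2 d.dΨ d.dΨ1 d.dP d.dP1 d.bΨ d.bΨ1 d.bΨ2 d.bP d.bP1 d.bP2 hf0 hf1 hf2 cf2 bf1 bf2
  set S : ℝ → E3 → ℝ := fun s y => RR H f Ψ P s y (w s y) with hS
  obtain ⟨cD, dD, dD', vt, vtt, hvt, hvtt, vt0, hpde⟩ := Duh_spec hH (R_cont cR cw) cS' cS'' dS dS'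
  have hlap : ∀ t, 0 ≤ t → ∀ x, lap (fun x => (g x + bet H t * h x) + Duh H S t x) x =
      ∑ i, Ψ2 t x (bv i) (bv i) + ∑ i, Duh H S'' t x (bv i) (bv i) := by
    intro t ht x
    have e : (fun x => (g x + bet H t * h x) + Duh H S t x) = fun x => Ψ t x + Duh H S t x := by
      funext x; rw [d.eΨ t ht]
    rw [e, ← Finset.sum_add_distrib]
    exact lap_eq (fun x => (d.dΨ t x).add (dD t x)) (fun x => (d.dΨ1 t x).add (dD' t x)) x
  have hw0 : ∀ t, 0 ≤ t → ∀ x, w t x = Duh H S t x := by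
    intro t ht x
    rw [fw t x, max_eq_left ht]
  have hR0 : ∀ s y, ρ < ‖y‖ → RR H f Ψ P s y 0 = 0 := by
    intro s y hy
    simp [RR, d.sΨ s y hy, d.sP s y hy, hf0]
  have hSs : ∀ s y, ρ + kk H (max s 0) 0 < ‖y‖ → S s y = 0 := by
    intro s y hy
    simp only [hS]
    rw [w_supp hH hR0 bw s y hy]
    exact hR0 s y (by have := kk_mono hH (le_max_right s 0); linarith)
  have hRi : ∀ (e : E3 ≃ₗᵢ[ℝ] E3) s y v, RR H f Ψ P s (e y) v = RR H f Ψ P s y v := by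
    intro e s y v
    simp only [RR, d.iΨ, d.iP]
  have hSi : ∀ (e : E3 ≃ₗᵢ[ℝ] E3) s y, S s (e y) = S s y := by
    intro e s y
    simp only [hS]
    rw [w_radial hH e (hRi e) bw, hRi]
  refine ⟨fun t x => (g x + bet H t * h x) + Duh H S t x,
    fun t x => Real.exp (-3 * H * t) * h x + vt t x,
    fun t x => -3 * H * Real.exp (-3 * H * t) * h x + vtt t x, ?_, ?_, ?_, ?_, ?_, ?_, ?_, ?_, ?_⟩
  · have hg2 : ContDiff ℝ 2 g := hg.of_le (WithTop.coe_le_coe.2 (le_top : ((2:ℕ):ℕ∞) ≤ ⊤))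
    have hh2 : ContDiff ℝ 2 h := hh.of_le (WithTop.coe_le_coe.2 (le_top : ((2:ℕ):ℕ∞) ≤ ⊤))
    exact ((hg2.comp contDiff_snd).add (((bet_smooth H).comp contDiff_fst).mul
      (hh2.comp contDiff_snd))).add cD
  · intro t x
    exact (((bet_deriv hH t).mul_const (h x)).const_add (g x)).add (hvt t x)
  · intro t x
    exact ((exp_deriv0 (-3 * H) t).mul_const (h x)).add (hvtt t x)
  · intro t ht x
    have e1 := hpde t x
    have e2 : S t x = 2 * H ^ 2 * w t x - f (Ψ t x + w t x) + P t x := rfl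
    rw [hw0 t ht, d.eΨ t ht, d.eP t ht] at e2
    simp only
    rw [hlap t ht]
    have e3 : (∑ i, Duh H S'' t x (bv i) (bv i)) = ∑ i, Duh H S'' t x (bv i) (bv i) := rfl
    linear_combination e1 + e2
  · intro t ht x
    simp only
    rw [hlap t ht]
    have e1 := one_le_exp' hH.le ht
    have a1 : ∀ i, |Ψ2 t x (bv i) (bv i)| ≤ D := fun i => bil_bound (d.bΨ2 t x) i
    have a2 : ∀ i, |Duh H S'' t x (bv i) (bv i)| ≤ Cst H D B * Real.exp (H * t) :=
      fun i => bil_bound (bS'' t ht x) i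
    have s1 : |∑ i, Ψ2 t x (bv i) (bv i)| ≤ 3 * D := by
      refine (Finset.abs_sum_le_sum_abs _ _).trans ((Finset.sum_le_sum fun i _ => a1 i).trans ?_)
      simp
    have s2 : |∑ i, Duh H S'' t x (bv i) (bv i)| ≤ 3 * (Cst H D B * Real.exp (H * t)) := by
      refine (Finset.abs_sum_le_sum_abs _ _).trans ((Finset.sum_le_sum fun i _ => a2 i).trans ?_)
      simp
    refine (abs_add_le _ _).trans ?_
    nlinarith
  · intro x
    simp [bet_zero, Duh_zero]
  · intro x
    simp [vt0]
  · intro t x y hxy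
    obtain ⟨e, rfl⟩ := refl_exists hxy
    simp only
    rw [hgr, hhr, Duh_inv H e (hSi e)]
  · intro t
    refine HasCompactSupport.of_support_subset_isCompact (isCompact_closedBall (0:E3) (ρ + |kk H t 0|)) ?_
    intro x hx
    by_contra hne
    rw [mem_closedBall_zero_iff, not_le] at hne
    apply hx
    have hρ : ρ < ‖x‖ := by have := abs_nonneg (kk H t 0); linarith
    simp only
    rw [hgs x hρ, hhs x hρ, Duh_supp hH hSs hne]
    simp


set_option maxHeartbeats 2000000 in
lemma dat_exists {H : ℝ} (hH : 0 < H) {g h : E3 → ℝ}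
    (hg : ContDiff ℝ (⊤ : ℕ∞) g) (hgsupp : HasCompactSupport g)
    (hh : ContDiff ℝ (⊤ : ℕ∞) h) (hhsupp : HasCompactSupport h)
    (hgrad : ∀ x y : E3, ‖x‖ = ‖y‖ → g x = g y)
    (hhrad : ∀ x y : E3, ‖x‖ = ‖y‖ → h x = h y) : ∃ D ρ : ℝ, 0 ≤ D ∧ (∀ y, ρ < ‖y‖ → g y = 0) ∧
      (∀ y, ρ < ‖y‖ → h y = 0) ∧ (∀ (e : E3 ≃ₗᵢ[ℝ] E3) y, g (e y) = g y) ∧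
      (∀ (e : E3 ≃ₗᵢ[ℝ] E3) y, h (e y) = h y) ∧ ∃ Ψ P Ψ1 P1 Ψ2 P2, Dat H D ρ g h Ψ P Ψ1 P1 Ψ2 P2 := by
  have hlg := lap_smooth hg
  have hlh := lap_smooth hh
  obtain ⟨D1, p1, g0, g1, g2⟩ := smooth_bound hg hgsupp
  obtain ⟨D2, p2, h0, h1, h2⟩ := smooth_bound hh hhsupp
  obtain ⟨D3, p3, lg0, lg1, lg2⟩ := smooth_bound hlg (lap_supp hgsupp)
  obtain ⟨D4, p4, lh0, lh1, lh2⟩ := smooth_bound hlh (lap_supp hhsupp)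
  set D0 := D1 + D2 + D3 + D4 with hD0
  set q := 1 + 1 / (3 * H) with hq
  have hq0 : 0 ≤ q := by positivity
  set D := 2 * q * D0 with hD
  have hDp : 0 ≤ D := by positivity
  -- time coefficients
  set α : ℝ → ℝ := fun _ => 1
  set β : ℝ → ℝ := fun s => bet H (max s 0) with hβ
  set γ : ℝ → ℝ := fun s => Real.exp (-2 * H * max s 0) with hγ
  set κ : ℝ → ℝ := fun s => γ s * β s with hκ
  have cα : Continuous α := continuous_const
  have cβ : Continuous β := (bet_smooth H).continuous.comp (by fun_prop)
  have cγ : Continuous γ := by fun_prop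
  have cκ : Continuous κ := cγ.mul cβ
  have h3H : 0 < 1 / (3 * H) := by positivity
  have bα : ∀ s, |α s| ≤ q := fun s => by simp only [α, abs_one]; linarith
  have bβ' : ∀ s, |β s| ≤ 1 / (3 * H) := fun s => bet_bound hH (le_max_right s 0)
  have bβ : ∀ s, |β s| ≤ q := fun s => (bβ' s).trans (by linarith)
  have bγ' : ∀ s, |γ s| ≤ 1 := fun s => by
    simp only [hγ]
    rw [abs_of_pos (Real.exp_pos _), Real.exp_le_one_iff]
    have := mul_nonneg hH.le (le_max_right s 0)
    linarith
  have bγ : ∀ s, |γ s| ≤ q := fun s => (bγ' s).trans (by linarith)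
  have bκ : ∀ s, |κ s| ≤ q := fun s => by
    simp only [hκ, abs_mul]
    exact (mul_le_of_le_one_left (abs_nonneg _) (bγ' s)).trans (bβ s)
  set Ψ : ℝ → E3 → ℝ := fun s y => α s • g y + β s • h y with hΨ
  set Ψ1 : ℝ → E3 → E3 →L[ℝ] ℝ := fun s y => α s • fderiv ℝ g y + β s • fderiv ℝ h y with hΨ1
  set Ψ2 : ℝ → E3 → E3 →L[ℝ] E3 →L[ℝ] ℝ := fun s y => α s • fderiv ℝ (fderiv ℝ g) y +
    β s • fderiv ℝ (fderiv ℝ h) y with hΨ2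
  set P : ℝ → E3 → ℝ := fun s y => γ s • lap g y + κ s • lap h y with hP
  set P1 : ℝ → E3 → E3 →L[ℝ] ℝ := fun s y => γ s • fderiv ℝ (lap g) y + κ s • fderiv ℝ (lap h) y with hP1
  set P2 : ℝ → E3 → E3 →L[ℝ] E3 →L[ℝ] ℝ := fun s y => γ s • fderiv ℝ (fderiv ℝ (lap g)) y +
    κ s • fderiv ℝ (fderiv ℝ (lap h)) y with hP2
  have d1 : D1 ≤ D0 := by linarith
  have d2 : D2 ≤ D0 := by linarith
  have d3 : D3 ≤ D0 := by linarith
  have d4 : D4 ≤ D0 := by linarith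
  have cΨ : Continuous fun p : ℝ × E3 => Ψ p.1 p.2 := comb_cont cα cβ hg.continuous hh.continuous
  have cΨ1 : Continuous fun p : ℝ × E3 => Ψ1 p.1 p.2 :=
    comb_cont cα cβ (smooth_fderiv hg).continuous (smooth_fderiv hh).continuous
  have cΨ2 : Continuous fun p : ℝ × E3 => Ψ2 p.1 p.2 :=
    comb_cont cα cβ (smooth_fderiv2 hg).continuous (smooth_fderiv2 hh).continuous
  have cP : Continuous fun p : ℝ × E3 => P p.1 p.2 := comb_cont cγ cκ hlg.continuous hlh.continuous
  have cP1 : Continuous fun p : ℝ × E3 => P1 p.1 p.2 :=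
    comb_cont cγ cκ (smooth_fderiv hlg).continuous (smooth_fderiv hlh).continuous
  have cP2 : Continuous fun p : ℝ × E3 => P2 p.1 p.2 :=
    comb_cont cγ cκ (smooth_fderiv2 hlg).continuous (smooth_fderiv2 hlh).continuous
  have dΨ : ∀ s y, HasFDerivAt (Ψ s) (Ψ1 s y) y := fun s y =>
    comb_deriv _ _ (smooth_d1 hg y) (smooth_d1 hh y)
  have dΨ1 : ∀ s y, HasFDerivAt (Ψ1 s) (Ψ2 s y) y := fun s y =>
    comb_deriv _ _ (smooth_d2 hg y) (smooth_d2 hh y)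
  have dP : ∀ s y, HasFDerivAt (P s) (P1 s y) y := fun s y =>
    comb_deriv _ _ (smooth_d1 hlg y) (smooth_d1 hlh y)
  have dP1 : ∀ s y, HasFDerivAt (P1 s) (P2 s y) y := fun s y =>
    comb_deriv _ _ (smooth_d2 hlg y) (smooth_d2 hlh y)
  have bΨ : ∀ s y, |Ψ s y| ≤ D := fun s y =>
    (Real.norm_eq_abs (Ψ s y)) ▸ comb_bound hq0 (bα s) (bβ s) ((g0 y).trans d1) ((h0 y).trans d2)
  have bΨ1 : ∀ s y, ‖Ψ1 s y‖ ≤ D := fun s y =>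
    comb_bound hq0 (bα s) (bβ s) ((g1 y).trans d1) ((h1 y).trans d2)
  have bΨ2 : ∀ s y, ‖Ψ2 s y‖ ≤ D := fun s y =>
    comb_bound (A := fderiv ℝ (fderiv ℝ g) y) (Q := fderiv ℝ (fderiv ℝ h) y) (D := D0) hq0 (bα s) (bβ s) ((g2 y).trans d1) ((h2 y).trans d2)
  have bP : ∀ s y, |P s y| ≤ D := fun s y =>
    (Real.norm_eq_abs (P s y)) ▸ comb_bound hq0 (bγ s) (bκ s) ((lg0 y).trans d3) ((lh0 y).trans d4)
  have bP1 : ∀ s y, ‖P1 s y‖ ≤ D := fun s y =>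
    comb_bound hq0 (bγ s) (bκ s) ((lg1 y).trans d3) ((lh1 y).trans d4)
  have bP2 : ∀ s y, ‖P2 s y‖ ≤ D := fun s y =>
    comb_bound (A := fderiv ℝ (fderiv ℝ (lap g)) y) (Q := fderiv ℝ (fderiv ℝ (lap h)) y) (D := D0) hq0 (bγ s) (bκ s) ((lg2 y).trans d3) ((lh2 y).trans d4)
  have key : ∀ u : E3 → ℝ, HasCompactSupport u → ∃ ρ : ℝ, ∀ y, ρ < ‖y‖ → u y = 0 := by
    intro u hu
    obtain ⟨ρ, hρ⟩ := hu.isCompact.isBounded.exists_norm_le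
    refine ⟨ρ, fun y hy => ?_⟩
    by_contra hne
    exact absurd (hρ y (subset_tsupport _ hne)) (not_le.2 hy)
  obtain ⟨r1, k1⟩ := key g hgsupp
  obtain ⟨r2, k2⟩ := key h hhsupp
  obtain ⟨r3, k3⟩ := key _ (lap_supp hgsupp)
  obtain ⟨r4, k4⟩ := key _ (lap_supp hhsupp)
  have k1' : ∀ y, max (max r1 r2) (max r3 r4) < ‖y‖ → g y = 0 := fun y hy =>
    k1 y ((le_max_left r1 r2 |>.trans (le_max_left _ _)).trans_lt hy)
  have k2' : ∀ y, max (max r1 r2) (max r3 r4) < ‖y‖ → h y = 0 := fun y hy =>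
    k2 y ((le_max_right r1 r2 |>.trans (le_max_left _ _)).trans_lt hy)
  have k3' : ∀ y, max (max r1 r2) (max r3 r4) < ‖y‖ → lap g y = 0 := fun y hy =>
    k3 y ((le_max_left r3 r4 |>.trans (le_max_right _ _)).trans_lt hy)
  have k4' : ∀ y, max (max r1 r2) (max r3 r4) < ‖y‖ → lap h y = 0 := fun y hy =>
    k4 y ((le_max_right r3 r4 |>.trans (le_max_right _ _)).trans_lt hy)
  have hgr : ∀ (e : E3 ≃ₗᵢ[ℝ] E3) y, g (e y) = g y := fun e y => hgrad _ _ (e.norm_map y)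
  have hhr : ∀ (e : E3 ≃ₗᵢ[ℝ] E3) y, h (e y) = h y := fun e y => hhrad _ _ (e.norm_map y)
  refine ⟨D, max (max r1 r2) (max r3 r4), hDp, k1', k2', hgr, hhr, Ψ, P, Ψ1, P1, Ψ2, P2, 
    cΨ, cΨ1, cΨ2, cP, cP1, cP2, dΨ, dΨ1, dP, dP1, bΨ, bΨ1, bΨ2, bP, bP1, bP2,
    fun s y hy => ?_, fun s y hy => ?_, fun e s y => ?_, fun e s y => ?_, fun s hs y => ?_, fun s hs y => ?_⟩
  · simp [hΨ, k1' y hy, k2' y hy]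
  · simp [hP, k3' y hy, k4' y hy]
  · simp only [hΨ, hgr, hhr]
  · simp only [hP]
    rw [lap_inv hg e (hgr e), lap_inv hh e (hhr e)]
  · simp [hΨ, α, hβ, max_eq_left hs]
  · have e1 : ∑ i, Ψ2 s y (bv i) (bv i) = lap g y + β s * lap h y := by
      rw [lap_eq (smooth_d1 hg) (smooth_d2 hg), lap_eq (smooth_d1 hh) (smooth_d2 hh), Finset.mul_sum,
        ← Finset.sum_add_distrib]
      refine Finset.sum_congr rfl fun i _ => ?_
      simp [hΨ2, α]
    rw [e1]
    simp only [hP, hκ, hγ, max_eq_left hs, smul_eq_mul]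
    ring

/-- Global solution for a nonlinearity with small derivative. -/
theorem thmA {H : ℝ} (hH : 0 < H) {g h : E3 → ℝ}
    (hg : ContDiff ℝ (⊤ : ℕ∞) g) (hgsupp : HasCompactSupport g)
    (hh : ContDiff ℝ (⊤ : ℕ∞) h) (hhsupp : HasCompactSupport h)
    (hgrad : ∀ x y : E3, ‖x‖ = ‖y‖ → g x = g y)
    (hhrad : ∀ x y : E3, ‖x‖ = ‖y‖ → h x = h y) {B : ℝ} (hB : 0 ≤ B) :
    ∃ C : ℝ, 0 ≤ C ∧ ∀ f f1 f2 : ℝ → ℝ, f 0 = 0 → (∀ s, HasDerivAt f (f1 s) s) →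
      (∀ s, HasDerivAt f1 (f2 s) s) → Continuous f2 → (∀ s, |f1 s| ≤ H ^ 2 / 2) →
      (∀ s, |f2 s| ≤ B) → ∃ φ φt φtt : ℝ → E3 → ℝ,
        ContDiff ℝ 2 (Function.uncurry φ) ∧
        (∀ t x, HasDerivAt (fun t => φ t x) (φt t x) t) ∧
        (∀ t x, HasDerivAt (fun t => φt t x) (φtt t x) t) ∧
        (∀ t, 0 ≤ t → ∀ x, φtt t x + 3 * H * φt t x - Real.exp (-2 * H * t) * lap (φ t) x
          + f (φ t x) = 0) ∧
        (∀ t, 0 ≤ t → ∀ x, |lap (φ t) x| ≤ C * Real.exp (H * t)) ∧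
        (∀ x, φ 0 x = g x) ∧ (∀ x, φt 0 x = h x) ∧
        (∀ t : ℝ, ∀ x y : E3, ‖x‖ = ‖y‖ → φ t x = φ t y) ∧
        (∀ t : ℝ, HasCompactSupport (φ t)) := by
  obtain ⟨D, ρ, hD, hgs, hhs, hgr, hhr, Ψ, P, Ψ1, P1, Ψ2, P2, d⟩ :=
    dat_exists hH hg hgsupp hh hhsupp hgrad hhrad
  have hK := K0_pos hH
  have hCst : 0 ≤ Cst H D B := by unfold Cst; positivity
  refine ⟨3 * (D + Cst H D B), by positivity, ?_⟩
  intro f f1 f2 hf0 hf1 hf2 cf2 bf1 bf2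
  exact thmA2 hH hD hB d hg hh hgr hhr hgs hhs hf0 hf1 hf2 cf2 bf1 bf2


lemma lap_mul (c : ℝ) (u : E3 → ℝ) (x : E3) : lap (fun y => c * u y) x = c * lap u x := by
  unfold lap
  rw [Finset.mul_sum]
  refine Finset.sum_congr rfl fun i _ => ?_
  have h1 : ∀ (v : E3 → ℝ) (y : E3), fderiv ℝ (fun y => c * v y) y = c • fderiv ℝ v y := by
    intro v y
    exact congrFun (fderiv_const_smul_field (𝕜 := ℝ) (f := v) c) y
  simp only [h1]
  simp only [_root_.smul_apply, smul_eq_mul, h1]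

/-- Small-data version of `thmA`. -/
theorem thmB {H : ℝ} (hH : 0 < H) {g h : E3 → ℝ}
    (hg : ContDiff ℝ (⊤ : ℕ∞) g) (hgsupp : HasCompactSupport g)
    (hh : ContDiff ℝ (⊤ : ℕ∞) h) (hhsupp : HasCompactSupport h)
    (hgrad : ∀ x y : E3, ‖x‖ = ‖y‖ → g x = g y)
    (hhrad : ∀ x y : E3, ‖x‖ = ‖y‖ → h x = h y) {B : ℝ} (hB : 0 ≤ B)
    {f f1 f2 : ℝ → ℝ} (hf0 : f 0 = 0) (hf1 : ∀ s, HasDerivAt f (f1 s) s)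
    (hf2 : ∀ s, HasDerivAt f1 (f2 s) s) (cf2 : Continuous f2) (bf1 : ∀ s, |f1 s| ≤ H ^ 2 / 2)
    (bf2 : ∀ s, |f2 s| ≤ B) :
    ∃ C : ℝ, 0 ≤ C ∧ ∀ ε : ℝ, 0 < ε → ε ≤ 1 → ∃ φ φt φtt : ℝ → E3 → ℝ,
        ContDiff ℝ 2 (Function.uncurry φ) ∧
        (∀ t x, HasDerivAt (fun t => φ t x) (φt t x) t) ∧
        (∀ t x, HasDerivAt (fun t => φt t x) (φtt t x) t) ∧
        (∀ t, 0 ≤ t → ∀ x, φtt t x + 3 * H * φt t x - Real.exp (-2 * H * t) * lap (φ t) x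
          + f (φ t x) = 0) ∧
        (∀ t, 0 ≤ t → ∀ x, |lap (φ t) x| ≤ C * ε * Real.exp (H * t)) ∧
        (∀ x, φ 0 x = ε * g x) ∧ (∀ x, φt 0 x = ε * h x) ∧
        (∀ t : ℝ, ∀ x y : E3, ‖x‖ = ‖y‖ → φ t x = φ t y) ∧
        (∀ t : ℝ, HasCompactSupport (φ t)) := by
  obtain ⟨C, hC, hA⟩ := thmA hH hg hgsupp hh hhsupp hgrad hhrad hB
  refine ⟨C, hC, fun ε he he1 => ?_⟩
  have hd : ∀ s, HasDerivAt (fun s => ε * s) ε s := fun s => by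
    simpa using (hasDerivAt_id s).const_mul ε
  obtain ⟨φ, φt, φtt, r1, r2, r3, r4, r5, r6, r7, r8, r9⟩ :=
    hA (fun s => f (ε * s) / ε) (fun s => f1 (ε * s)) (fun s => f2 (ε * s) * ε)
    (by simp [hf0])
    (fun s => by
      have := ((hf1 (ε * s)).comp s (hd s)).div_const ε
      rw [mul_div_cancel_right₀ _ he.ne'] at this
      exact this)
    (fun s => (hf2 (ε * s)).comp s (hd s))
    (by fun_prop) (fun s => bf1 _)
    (fun s => by
      rw [abs_mul, abs_of_pos he]
      exact (mul_le_of_le_one_right (abs_nonneg _) he1).trans (bf2 _))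
  refine ⟨fun t x => ε * φ t x, fun t x => ε * φt t x, fun t x => ε * φtt t x,
    contDiff_const.mul r1, fun t x => (r2 t x).const_mul ε, fun t x => (r3 t x).const_mul ε,
    fun t ht x => ?_, fun t ht x => ?_, fun x => by simp only [r6], fun x => by simp only [r7],
    fun t x y hxy => by simp only [r8 t x y hxy], fun t => (r9 t).mul_left⟩
  · have := r4 t ht x
    rw [lap_mul]
    have h2 : f (ε * φ t x) = ε * (f (ε * φ t x) / ε) := by field_simp
    rw [h2]
    linear_combination ε * this
  · rw [lap_mul, abs_mul, abs_of_pos he]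
    have := mul_le_mul_of_nonneg_left (r5 t ht x) he.le
    linarith

lemma trunc {H : ℝ} (hH : 0 < H) {f : ℝ → ℝ} (hf : ContDiff ℝ 2 f) (hf0 : f 0 = 0)
    {δ M : ℝ} (hδ : 0 < δ) (hM : 0 < M)
    (hf' : ∀ s ∈ Set.Ioo (-δ) δ, |deriv f s| ≤ M * s ^ 2) :
    ∃ η : ℝ, 0 < η ∧ ∃ (B : ℝ) (k k1 k2 : ℝ → ℝ), 0 ≤ B ∧ k 0 = 0 ∧ (∀ s, HasDerivAt k (k1 s) s) ∧
      (∀ s, HasDerivAt k1 (k2 s) s) ∧ Continuous k2 ∧ (∀ s, |k1 s| ≤ H ^ 2 / 2) ∧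
      (∀ s, |k2 s| ≤ B) ∧ ∀ s, |s| ≤ η → k s = f s := by
  obtain ⟨η, hη, h1, h2⟩ : ∃ η : ℝ, 0 < η ∧ 2 * η < δ ∧ M * (2 * η) ^ 2 ≤ H ^ 2 / 2 := by
    have hc : Tendsto (fun η : ℝ => M * (2 * η) ^ 2) (𝓝[>] 0) (𝓝 0) := by
      have : Continuous (fun η : ℝ => M * (2 * η) ^ 2) := by fun_prop
      simpa using (this.tendsto 0).mono_left (nhdsWithin_le_nhds (s := Ioi 0))
    have e1 := hc.eventually_le_const (u := H ^ 2 / 2) (by positivity)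
    have hc2 : Tendsto (fun η : ℝ => 2 * η) (𝓝[>] 0) (𝓝 0) := by
      have : Continuous (fun η : ℝ => 2 * η) := by fun_prop
      simpa using (this.tendsto 0).mono_left (nhdsWithin_le_nhds (s := Ioi 0))
    have e2 := hc2.eventually_lt_const hδ
    obtain ⟨η, ⟨a, b⟩, c⟩ := ((e1.and e2).and self_mem_nhdsWithin).exists
    exact ⟨η, c, b, a⟩
  let b : ContDiffBump (0:ℝ) := ⟨η, 2 * η, hη, by linarith⟩
  have hdf : ContDiff ℝ 1 (deriv f) := by
    have : ContDiff ℝ (1 + 1) f := by simpa [one_add_one_eq_two] using hf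
    exact (contDiff_succ_iff_deriv.1 this).2.2
  have hk1 : ContDiff ℝ 1 (fun s => deriv f s * b s) := hdf.mul b.contDiff
  have hsupp : HasCompactSupport (fun s => deriv f s * b s) := b.hasCompactSupport.mul_left
  have ck2 : Continuous (deriv (fun s => deriv f s * b s)) := hk1.continuous_deriv le_rfl
  obtain ⟨B, hB⟩ := hsupp.deriv.exists_bound_of_continuous ck2
  have hk : ∀ s, HasDerivAt (fun s => ∫ σ in (0:ℝ)..s, deriv f σ * b σ) (deriv f s * b s) s := fun s =>
    (hk1.continuous).integral_hasStrictDerivAt 0 s |>.hasDerivAt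
  refine ⟨η, hη, B, fun s => ∫ σ in (0:ℝ)..s, deriv f σ * b σ, fun s => deriv f s * b s,
    deriv (fun s => deriv f s * b s), (norm_nonneg _).trans (hB 0), by simp, hk,
    fun s => ((hk1.differentiable one_ne_zero) s).hasDerivAt, ck2, fun s => ?_, hB, fun s hs => ?_⟩
  · by_cases hs : |s| < 2 * η
    · have hs' := abs_lt.1 hs
      have h3 := hf' s ⟨by linarith, by linarith⟩
      have h4 : s ^ 2 ≤ (2 * η) ^ 2 := by
        rw [← sq_abs s]; exact pow_le_pow_left₀ (abs_nonneg _) hs.le 2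
      rw [abs_mul, abs_of_nonneg b.nonneg]
      have h5 : M * s ^ 2 ≤ M * (2 * η) ^ 2 := mul_le_mul_of_nonneg_left h4 hM.le
      calc |deriv f s| * b s ≤ |deriv f s| := mul_le_of_le_one_right (abs_nonneg _) b.le_one
        _ ≤ _ := by linarith
    · have : b s = 0 := b.zero_of_le_dist (by simpa using not_lt.1 hs)
      simp only [this, mul_zero, abs_zero]; positivity
  · have e : ∫ σ in (0:ℝ)..s, deriv f σ * b σ = ∫ σ in (0:ℝ)..s, deriv f σ := by
      refine intervalIntegral.integral_congr fun σ hσ => ?_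
      have : |σ| ≤ η := by
        have := abs_sub_left_of_mem_uIcc hσ
        simp at this
        exact this.trans hs
      have : b σ = 1 := b.one_of_mem_closedBall (by simpa using this)
      simp [this]
    change (∫ σ in (0:ℝ)..s, deriv f σ * b σ) = f s
    rw [e, intervalIntegral.integral_deriv_eq_sub (fun x _ => (hf.differentiable two_ne_zero) x)
      (hdf.continuous.intervalIntegrable _ _), hf0, sub_zero]


lemma pot_deriv {f : ℝ → ℝ} (cf : Continuous f) (s : ℝ) : HasDerivAt (pot f) (f s) s :=
  (cf.integral_hasStrictDerivAt 0 s).hasDerivAt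

lemma pot_zero (f : ℝ → ℝ) : pot f 0 = 0 := by simp [pot]

lemma energy {H : ℝ} (hH : 0 < H) {f : ℝ → ℝ} (cf : Continuous f) {C C1 : ℝ}
    {κ : ℝ} (hκ : 0 < κ) : ∃ ε0 : ℝ, 0 < ε0 ∧ ∀ ε, 0 < ε → ε ≤ ε0 →
    ∀ (y y1 y2 p : ℝ → ℝ) (T : ℝ), 0 ≤ T → (∀ t, HasDerivAt y (y1 t) t) → (∀ t, HasDerivAt y1 (y2 t) t) →
    |y 0| ≤ C1 * ε → |y1 0| ≤ C1 * ε → (∀ t ∈ Ico 0 T, y2 t + 3 * H * y1 t + f (y t) = p t) →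
    (∀ t ∈ Ico 0 T, |p t| ≤ C * ε * Real.exp (-H * t)) →
    ∀ t ∈ Icc 0 T, y1 t ^ 2 / 2 + pot f (y t) ≤ κ := by
  have cF : Continuous (pot f) := continuous_iff_continuousAt.2 fun s => (pot_deriv cf s).continuousAt
  obtain ⟨d, hd, hd2⟩ : ∃ d > 0, ∀ s, |s| < d → pot f s < κ / 2 := by
    have := (cF.tendsto 0).eventually_lt_const (u := κ / 2) (by rw [pot_zero]; positivity)
    obtain ⟨d, hd, h⟩ := Metric.eventually_nhds_iff.1 this
    exact ⟨d, hd, fun s hs => h (by simpa using hs)⟩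
  have t1 : ∀ᶠ ε in 𝓝[>] (0:ℝ), |C1| * ε < d := by
    have : Continuous (fun η : ℝ => |C1| * η) := by fun_prop
    have := (this.tendsto 0).mono_left (nhdsWithin_le_nhds (s := Ioi 0))
    exact this.eventually_lt_const (by simpa using hd)
  have t2 : ∀ᶠ ε in 𝓝[>] (0:ℝ), (C1 * ε) ^ 2 / 2 + (C * ε) ^ 2 / (24 * H ^ 2) < κ / 2 := by
    have : Continuous (fun ε : ℝ => (C1 * ε) ^ 2 / 2 + (C * ε) ^ 2 / (24 * H ^ 2)) := by fun_prop
    have := (this.tendsto 0).mono_left (nhdsWithin_le_nhds (s := Ioi 0))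
    exact this.eventually_lt_const (by simpa using hκ)
  obtain ⟨ε0, ⟨a, b⟩, c⟩ := ((t1.and t2).and self_mem_nhdsWithin).exists
  refine ⟨ε0, c, ?_⟩
  intro ε he hle y y1 y2 p T hT hy hy1 i0 i1 hode hp t ht
  set W : ℝ → ℝ := fun t => y1 t ^ 2 / 2 + pot f (y t) + (C * ε) ^ 2 / (24 * H ^ 2) * Real.exp (-2 * H * t)
  have hW : ∀ t, HasDerivAt W (y1 t * y2 t + f (y t) * y1 t +
      (C * ε) ^ 2 / (24 * H ^ 2) * (-2 * H * Real.exp (-2 * H * t))) t := by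
    intro t
    have e1 := ((hy1 t).pow 2).div_const 2
    have e2 := (pot_deriv cf (y t)).comp t (hy t)
    have e3 := (exp_deriv0 (-2 * H) t).const_mul ((C * ε) ^ 2 / (24 * H ^ 2))
    refine ((e1.add e2).add e3).congr_deriv ?_
    simp; ring
  have hanti : AntitoneOn W (Icc 0 T) := by
    refine antitoneOn_of_deriv_nonpos (convex_Icc 0 T)
      (fun t _ => (hW t).continuousAt.continuousWithinAt) (fun t _ => (hW t).differentiableAt.differentiableWithinAt) ?_
    intro t ht
    rw [interior_Icc] at ht
    have ht' : t ∈ Ico 0 T := ⟨ht.1.le, ht.2⟩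
    rw [(hW t).deriv]
    have h1 := hode t ht'
    have h2 := hp t ht'
    have h3 : p t ^ 2 ≤ (C * ε) ^ 2 * Real.exp (-2 * H * t) := by
      have e : Real.exp (-2 * H * t) = Real.exp (-H * t) ^ 2 := by
        rw [← Real.exp_nat_mul]; congr 1; push_cast; ring
      rw [e, ← mul_pow, ← sq_abs]
      exact pow_le_pow_left₀ (abs_nonneg _) h2 2
    have h4 : y1 t * y2 t + f (y t) * y1 t = y1 t * (p t - 3 * H * y1 t) := by rw [← h1]; ring
    rw [h4]
    have h5 : y1 t * (p t - 3 * H * y1 t) = p t ^ 2 / (12 * H) - 3 * H * (y1 t - p t / (6 * H)) ^ 2 := by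
      field_simp; ring
    have h6 : (C * ε) ^ 2 / (24 * H ^ 2) * (-2 * H * Real.exp (-2 * H * t)) =
      -(((C * ε) ^ 2 * Real.exp (-2 * H * t)) / (12 * H)) := by field_simp; ring
    rw [h5, h6]
    have h7 : p t ^ 2 / (12 * H) ≤ ((C * ε) ^ 2 * Real.exp (-2 * H * t)) / (12 * H) := by gcongr
    have h8 : 0 ≤ 3 * H * (y1 t - p t / (6 * H)) ^ 2 := by positivity
    linarith
  have h1 : W t ≤ W 0 := hanti ⟨le_rfl, hT⟩ ht ht.1
  have h2 : 0 ≤ (C * ε) ^ 2 / (24 * H ^ 2) * Real.exp (-2 * H * t) := by positivity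
  have hC1e : C1 * ε ≤ |C1| * ε0 := 
    (mul_le_mul_of_nonneg_right (le_abs_self _) he.le).trans (mul_le_mul_of_nonneg_left hle (abs_nonneg _))
  have h3 := hd2 (y 0) (by linarith)
  have h4 : y1 0 ^ 2 ≤ (C1 * ε) ^ 2 := by
    rw [← sq_abs]; exact pow_le_pow_left₀ (abs_nonneg _) i1 2
  have h5 : ε ^ 2 ≤ ε0 ^ 2 := pow_le_pow_left₀ he.le hle 2
  have h6 : (C1 * ε) ^ 2 ≤ (C1 * ε0) ^ 2 := by rw [mul_pow, mul_pow]; gcongr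
  have h7 : (C * ε) ^ 2 / (24 * H ^ 2) ≤ (C * ε0) ^ 2 / (24 * H ^ 2) := by
    rw [mul_pow, mul_pow]; gcongr
  simp only [W, mul_zero, Real.exp_zero, mul_one] at h1
  linarith

lemma side {H : ℝ} (hH : 0 < H) {f : ℝ → ℝ} (cf : Continuous f) (hF : ∀ s, 0 ≤ pot f s)
    {η : ℝ} (hη : 0 < η) {C C1 : ℝ} (hC : 0 ≤ C) :
    ∃ b ε0 : ℝ, 0 < b ∧ b ≤ η ∧ 0 < ε0 ∧ ∀ ε, 0 < ε → ε ≤ ε0 →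
    ∀ (y y1 y2 p : ℝ → ℝ) (T : ℝ), 0 ≤ T → (∀ t, HasDerivAt y (y1 t) t) → (∀ t, HasDerivAt y1 (y2 t) t) →
    |y 0| ≤ C1 * ε → |y1 0| ≤ C1 * ε → (∀ t ∈ Ico 0 T, y2 t + 3 * H * y1 t + f (y t) = p t) →
    (∀ t ∈ Ico 0 T, |p t| ≤ C * ε * Real.exp (-H * t)) → (∀ t ∈ Ico 0 T, y t < b) → y T < b := by
  by_cases hc : ∃ b, 0 < b ∧ b ≤ η ∧ 0 < pot f b
  · obtain ⟨b, hb, hbη, hFb⟩ := hc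
    obtain ⟨ε0, he0, hen⟩ := energy hH cf (C := C) (C1 := C1) (half_pos hFb)
    have t1 : ∀ᶠ ε in 𝓝[>] (0:ℝ), |C1| * ε < b := by
      have : Continuous (fun η : ℝ => |C1| * η) := by fun_prop
      have := (this.tendsto 0).mono_left (nhdsWithin_le_nhds (s := Ioi 0))
      exact this.eventually_lt_const (by simpa using hb)
    obtain ⟨ε1, a1, he1⟩ := (t1.and self_mem_nhdsWithin).exists
    refine ⟨b, min ε0 ε1, hb, hbη, lt_min he0 he1, ?_⟩
    intro ε he hle y y1 y2 p T hT hy hy1 i0 i1 hode hp hlt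
    have hC1e : C1 * ε ≤ |C1| * ε1 := 
      (mul_le_mul_of_nonneg_right (le_abs_self _) he.le).trans
        (mul_le_mul_of_nonneg_left (hle.trans (min_le_right _ _)) (abs_nonneg _))
    have cy : Continuous y := continuous_iff_continuousAt.2 fun t => (hy t).continuousAt
    by_contra hcon
    push Not at hcon
    have hE := hen ε he (hle.trans (min_le_left _ _)) y y1 y2 p T hT hy hy1 i0 i1 hode hp
    have h0 : y 0 < b := (le_abs_self _).trans_lt (by linarith)
    obtain ⟨t, ht, hyt⟩ := intermediate_value_Icc hT cy.continuousOn ⟨h0.le, hcon⟩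
    have := hE t ht
    rw [hyt] at this
    nlinarith [sq_nonneg (y1 t)]
  · push Not at hc
    have hF0 : ∀ s ∈ Ioo 0 η, f s = 0 := by
      intro s hs
      have h1 : pot f =ᶠ[𝓝 s] fun _ => 0 := by
        filter_upwards [Ioo_mem_nhds hs.1 hs.2] with r hr
        exact le_antisymm (hc r hr.1 hr.2.le) (hF r)
      have h2 := h1.deriv_eq
      rw [(pot_deriv cf s).deriv] at h2
      simpa using h2
    obtain ⟨ε0, he0, hen⟩ := energy hH cf (C := C) (C1 := C1) (κ := H ^ 2 * η ^ 2 / 8) (by positivity)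
    have t1 : ∀ᶠ ε in 𝓝[>] (0:ℝ), |C1| * ε < η / 3 := by
      have : Continuous (fun η : ℝ => |C1| * η) := by fun_prop
      have := (this.tendsto 0).mono_left (nhdsWithin_le_nhds (s := Ioi 0))
      exact this.eventually_lt_const (by simpa using hη)
    have t2 : ∀ᶠ ε in 𝓝[>] (0:ℝ), C * ε / H < H * η / 2 := by
      have : Continuous (fun ε : ℝ => C * ε / H) := by fun_prop
      have := (this.tendsto 0).mono_left (nhdsWithin_le_nhds (s := Ioi 0))
      exact this.eventually_lt_const (by simp; positivity)
    obtain ⟨ε1, ⟨a1, a2⟩, he1⟩ := ((t1.and t2).and self_mem_nhdsWithin).exists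
    refine ⟨η, min ε0 ε1, hη, le_rfl, lt_min he0 he1, ?_⟩
    intro ε he hle y y1 y2 p T hT hy hy1 i0 i1 hode hp hlt
    have hle1 := hle.trans (min_le_right _ _)
    have hC1e : C1 * ε ≤ |C1| * ε1 := 
      (mul_le_mul_of_nonneg_right (le_abs_self _) he.le).trans
        (mul_le_mul_of_nonneg_left hle1 (abs_nonneg _))
    have hCe : C * ε / H ≤ C * ε1 / H := by gcongr
    have cy : Continuous y := continuous_iff_continuousAt.2 fun t => (hy t).continuousAt
    by_contra hcon
    push Not at hcon
    have hE := hen ε he (hle.trans (min_le_left _ _)) y y1 y2 p T hT hy hy1 i0 i1 hode hp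
    have h0 : y 0 < η / 3 := (le_abs_self _).trans_lt (by linarith)
    have hT0 : 0 < T := by
      rcases hT.eq_or_lt with h | h
      · rw [← h] at hcon; linarith
      · exact h
    -- last time below the level
    set S : Set ℝ := Icc 0 T ∩ {t | y t ≤ η / 3} with hS
    have cS : IsCompact S := isCompact_Icc.inter_right (isClosed_le cy continuous_const)
    have nS : S.Nonempty := ⟨0, ⟨le_rfl, hT⟩, h0.le⟩
    obtain ⟨t0, ht0, hmax⟩ := cS.exists_isGreatest nS
    have hlt0 : t0 < T := by
      rcases ht0.1.2.eq_or_lt with h | h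
      · have := ht0.2
        rw [mem_setOf_eq, h] at this; linarith
      · exact h
    have hgt : ∀ t, t0 < t → t ≤ T → η / 3 < y t := by
      intro t h1 h2
      by_contra h3
      have := hmax ⟨⟨ht0.1.1.trans h1.le, h2⟩, not_lt.1 h3⟩
      linarith
    set V : ℝ → ℝ := fun t => y1 t + 3 * H * y t + C * ε / H * Real.exp (-H * t)
    have hV : ∀ t, HasDerivAt V (y2 t + 3 * H * y1 t + C * ε / H * (-H * Real.exp (-H * t))) t := by
      intro t
      exact ((hy1 t).add ((hy t).const_mul (3 * H))).add ((exp_deriv0 (-H) t).const_mul (C * ε / H))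
    have hanti : AntitoneOn V (Icc t0 T) := by
      refine antitoneOn_of_deriv_nonpos (convex_Icc t0 T)
        (fun t _ => (hV t).continuousAt.continuousWithinAt) (fun t _ => (hV t).differentiableAt.differentiableWithinAt) ?_
      intro t ht
      rw [interior_Icc] at ht
      have ht' : t ∈ Ico 0 T := ⟨ht0.1.1.trans ht.1.le, ht.2⟩
      rw [(hV t).deriv]
      have h1 := hode t ht'
      have h2 := (le_abs_self _).trans (hp t ht')
      rw [hF0 (y t) ⟨by linarith [hgt t ht.1 ht.2.le], hlt t ht'⟩] at h1
      have h6 : C * ε / H * (-H * Real.exp (-H * t)) = -(C * ε * Real.exp (-H * t)) := by field_simp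
      rw [h6]; linarith
    have h1 : V T ≤ V t0 := hanti ⟨le_rfl, hlt0.le⟩ ⟨hlt0.le, le_rfl⟩ hlt0.le
    have h2 : 0 ≤ C * ε / H * Real.exp (-H * T) := by positivity
    have h3 : C * ε / H * Real.exp (-H * t0) ≤ C * ε / H := by
      refine mul_le_of_le_one_right (by positivity) (Real.exp_le_one_iff.2 ?_)
      nlinarith [ht0.1.1]
    have h4 : y1 t0 ≤ H * η / 2 := by
      have := hE t0 ht0.1
      have := hF (y t0)
      refine abs_le_of_sq_le_sq' (?_ : y1 t0 ^ 2 ≤ (H * η / 2) ^ 2) (by positivity) |>.2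
      nlinarith
    have h5 : 0 ≤ y1 T := by
      have := (hy T).tendsto_slope.mono_left (nhdsWithin_mono T (fun t (ht : t ∈ Iio T) => (ne_of_lt ht : t ≠ T)))
      refine ge_of_tendsto this ?_
      filter_upwards [Ioo_mem_nhdsLT hT0] with t ht
      rw [slope_def_field]
      have := hlt t ⟨ht.1.le, ht.2⟩
      exact div_nonneg_of_nonpos (by linarith) (by linarith [ht.2])
    have h6 : y t0 ≤ η / 3 := ht0.2
    simp only [V] at h1
    have h7 : H * y t0 ≤ H * (η / 3) := mul_le_mul_of_nonneg_left h6 hH.le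
    have h8 : H * η ≤ H * y T := mul_le_mul_of_nonneg_left hcon hH.le
    have h9 : 0 < H * η := by positivity
    linarith

lemma pot_refl (f : ℝ → ℝ) (s : ℝ) : pot (fun s => -f (-s)) s = pot f (-s) := by
  unfold pot
  rw [intervalIntegral.integral_neg, intervalIntegral.integral_comp_neg, neg_zero,
    intervalIntegral.integral_symm, neg_neg]

lemma ode_bound {H : ℝ} (hH : 0 < H) {f k : ℝ → ℝ} (cf : Continuous f) (hF : ∀ s, 0 ≤ pot f s)
    {η : ℝ} (hη : 0 < η) (hk : ∀ s, |s| ≤ η → k s = f s) {C C1 : ℝ} (hC : 0 ≤ C) :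
    ∃ ε : ℝ, 0 < ε ∧ ε ≤ 1 ∧
    ∀ (y y1 y2 p : ℝ → ℝ), (∀ t, HasDerivAt y (y1 t) t) → (∀ t, HasDerivAt y1 (y2 t) t) →
    |y 0| ≤ C1 * ε → |y1 0| ≤ C1 * ε → (∀ t, 0 ≤ t → y2 t + 3 * H * y1 t + k (y t) = p t) →
    (∀ t, 0 ≤ t → |p t| ≤ C * ε * Real.exp (-H * t)) → ∀ t, 0 ≤ t → |y t| ≤ η := by
  obtain ⟨b, e0, hb, hbη, he0, hs⟩ := side hH cf hF hη (C1 := C1) hC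
  obtain ⟨b', e0', hb', hbη', he0', hs'⟩ := side hH (f := fun s => -f (-s)) (by fun_prop)
    (fun s => by rw [pot_refl]; exact hF _) hη (C1 := C1) hC
  have hε : 0 < min 1 (min e0 e0') := lt_min one_pos (lt_min he0 he0')
  refine ⟨min 1 (min e0 e0'), hε, min_le_left _ _, ?_⟩
  generalize hee : min 1 (min e0 e0') = ε at *
  have hle : ε ≤ e0 := hee ▸ (min_le_right _ _).trans (min_le_left _ _)
  have hle' : ε ≤ e0' := hee ▸ (min_le_right _ _).trans (min_le_right _ _)
  intro y y1 y2 p hy hy1 i0 i1 hode hp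
  have cy : Continuous y := continuous_iff_continuousAt.2 fun t => (hy t).continuousAt
  have main : ∀ T, 0 ≤ T → (∀ t ∈ Ico 0 T, -b' < y t ∧ y t < b) → -b' < y T ∧ y T < b := by
    intro T hT hin
    have ode : ∀ t ∈ Ico 0 T, y2 t + 3 * H * y1 t + f (y t) = p t := by
      intro t ht
      rw [← hode t ht.1, hk (y t) (abs_le.2 ⟨by linarith [(hin t ht).1], by linarith [(hin t ht).2]⟩)]
    constructor
    · have := hs' ε hε hle' (fun t => -y t) (fun t => -y1 t) (fun t => -y2 t) (fun t => -p t) T hT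
        (fun t => (hy t).neg) (fun t => (hy1 t).neg) (by simpa using i0) (by simpa using i1)
        (fun t ht => by simp only [neg_neg]; linarith [ode t ht]) (fun t ht => by rw [abs_neg]; exact hp t ht.1)
        (fun t ht => by linarith [(hin t ht).1])
      linarith
    · exact hs ε hε hle y y1 y2 p T hT hy hy1 i0 i1 ode (fun t ht => hp t ht.1) (fun t ht => (hin t ht).2)
  have all : ∀ t, 0 ≤ t → -b' < y t ∧ y t < b := by
    by_contra hcon
    push Not at hcon
    set S : Set ℝ := Ici 0 ∩ y ⁻¹' (Ioo (-b') b)ᶜ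
    have cS : IsClosed S := isClosed_Ici.inter (isOpen_Ioo.isClosed_compl.preimage cy)
    obtain ⟨t, ht, h1⟩ := hcon
    have nS : S.Nonempty := ⟨t, ht, fun h2 => by linarith [h1 h2.1, h2.2]⟩
    have bS : BddBelow S := ⟨0, fun t ht => ht.1⟩
    have hm := cS.csInf_mem nS bS
    refine hm.2 (main _ hm.1 fun t ht => ?_)
    by_contra h3
    have := csInf_le bS (show t ∈ S from ⟨ht.1, h3⟩)
    linarith [ht.2]
  intro t ht
  have := all t ht
  exact abs_le.2 ⟨by linarith, by linarith⟩

/-- Global existence of radial, spatially compactly supported `C²` solutions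
of the de Sitter Klein–Gordon equation `∂ₜ²φ + 3H ∂ₜφ - e^{-2Ht} Δφ + f(φ) = 0` for small
multiples `(ε g, ε h)` of fixed radial `C₀^∞` initial data. -/
theorem global_existence_deSitter
    (H : ℝ) (hH : 0 < H)
    (f : ℝ → ℝ) (hf : ContDiff ℝ 2 f) (hf0 : f 0 = 0)
    (hFpos : ∀ s : ℝ, 0 ≤ pot f s)
    (δ M : ℝ) (hδ : 0 < δ) (hM : 0 < M)
    (hf' : ∀ s ∈ Set.Ioo (-δ) δ, |deriv f s| ≤ M * s ^ 2)
    (g h : E3 → ℝ)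
    (hg : ContDiff ℝ (⊤ : ℕ∞) g) (hgsupp : HasCompactSupport g)
    (hh : ContDiff ℝ (⊤ : ℕ∞) h) (hhsupp : HasCompactSupport h)
    (hgrad : ∀ x y : E3, ‖x‖ = ‖y‖ → g x = g y)
    (hhrad : ∀ x y : E3, ‖x‖ = ‖y‖ → h x = h y) :
    ∃ ε : ℝ, 0 < ε ∧ ∃ φ : ℝ → E3 → ℝ,
      ContDiff ℝ 2 (Function.uncurry φ) ∧
      (∀ t : ℝ, 0 ≤ t → ∀ x : E3,
        dt2 φ t x + 3 * H * dt1 φ t x - Real.exp (-2 * H * t) * lap (φ t) x + f (φ t x) = 0) ∧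
      (∀ x : E3, φ 0 x = ε * g x) ∧
      (∀ x : E3, dt1 φ 0 x = ε * h x) ∧
      (∀ t : ℝ, ∀ x y : E3, ‖x‖ = ‖y‖ → φ t x = φ t y) ∧
      (∀ t : ℝ, HasCompactSupport (φ t)) := by
  obtain ⟨η, hη, B, k, k1, k2, hB, hk0, hk1, hk2, ck2, bk1, bk2, hkf⟩ := trunc hH hf hf0 hδ hM hf'
  obtain ⟨C, hC, hT⟩ := thmB hH hg hgsupp hh hhsupp hgrad hhrad hB hk0 hk1 hk2 ck2 bk1 bk2
  obtain ⟨Dg, pg, bg, -, -⟩ := smooth_bound hg hgsupp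
  obtain ⟨Dh, ph, bh, -, -⟩ := smooth_bound hh hhsupp
  obtain ⟨ε, he, he1, hode⟩ := ode_bound hH hf.continuous hFpos hη hkf (C := C) (C1 := Dg + Dh) hC
  obtain ⟨φ, φt, φtt, r1, r2, r3, r4, r5, r6, r7, r8, r9⟩ := hT ε he he1
  have e1 : ∀ t x, dt1 φ t x = φt t x := fun t x => (r2 t x).deriv
  have e2 : ∀ t x, dt2 φ t x = φtt t x := fun t x => by
    unfold dt2
    simp only [e1]
    exact (r3 t x).deriv
  refine ⟨ε, he, φ, r1, fun t ht x => ?_, r6, fun x => by rw [e1, r7], r8, r9⟩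
  have hb : |φ t x| ≤ η := by
    refine hode (fun t => φ t x) (fun t => φt t x) (fun t => φtt t x)
      (fun t => Real.exp (-2 * H * t) * lap (φ t) x) (fun t => r2 t x) (fun t => r3 t x) ?_ ?_
      (fun t ht => by linarith [r4 t ht x]) (fun t ht => ?_) t ht
    · simp only [r6]
      rw [abs_mul, abs_of_pos he, mul_comm]
      exact mul_le_mul_of_nonneg_right (by linarith [bg x]) he.le
    · simp only [r7]
      rw [abs_mul, abs_of_pos he, mul_comm]
      exact mul_le_mul_of_nonneg_right (by linarith [bh x]) he.le
    · rw [abs_mul, abs_of_pos (Real.exp_pos _)]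
      have h1 := mul_le_mul_of_nonneg_left (r5 t ht x) (Real.exp_pos (-2 * H * t)).le
      have h2 : Real.exp (-H * t) = Real.exp (-2 * H * t) * Real.exp (H * t) := by
        rw [← Real.exp_add]; congr 1; ring
      rw [h2]
      linarith
  rw [e1, e2, ← hkf _ hb]
  exact r4 t ht x

end
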